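/- arXiv:2301.05811 — 5 statements merged into one kernel-verified Lean document; each statement's English description precedes it below -/
import Mathlib

section
/- There is an absolute constant C > 0 such that the following holds. Let ε ∈ (0,1), let L be a positive integer, and let a, b ∈ ℝⁿ be nonzero vectors such that (a[i]/‖a‖)² and (b[i]/‖b‖)² are integer multiples of 1/L for every i. Set u = a/‖a‖ and v = b/‖b‖, with expanded supports Ū and V̄ in {1,...,n}×{1,...,L}. Let m ≥ C/ε² be an integer and let h¹,...,hᵐ be mutually independent uniform hash families on {1,...,n}×{1,...,L}. For each i, let ℓ_U^i and ℓ_V^i be the (almost surely unique) minimizers of hⁱ over Ū and over V̄, with block indices j_U^i and j_V^i; define Z_i = 1[hⁱ(ℓ_U^i) = hⁱ(ℓ_V^i)] · u[j_U^i]·v[j_V^i] / min(u[j_U^i]², v[j_V^i]²), define M̃ = (1/L)·(m / ∑_{i=1}^{m} min(hⁱ(ℓ_U^i), hⁱ(ℓ_V^i)) − 1), and define the estimate F = ‖a‖·‖b‖·(M̃/m)·∑_{i=1}^{m} Z_i. Then with probability at least 2/3, |F − ⟨a,b⟩| ≤ ε · max(‖a_I‖·‖b‖, ‖a‖·‖b_I‖),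 where I = supp(a) ∩ supp(b). -/
open MeasureTheory Finset
open scoped ENNReal

/-- The product measure on `J → ℝ` in which each coordinate is an independent
uniform random variable on `[0,1]`: a uniform hash family on `J`. -/
noncomputable def uniformHash (J : Type*) [Fintype J] : Measure (J → ℝ) :=
  Measure.pi fun _ : J => (volume : Measure ℝ).restrict (Set.Icc 0 1)

/-- A minimizer of `f` over the nonempty finite set `s` (the minimizer of a uniform
hash family over a nonempty set is almost surely unique). -/
noncomputable def argminOn {α : Type*} (s : Finset α) (hs : s.Nonempty) (f : α → ℝ) : α :=
  (s.exists_min_image f hs).choose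

/-- The expanded support of a vector `u` with discretization parameter `L`:
`Ū = {(i,k) ∈ {1,...,n} × {1,...,L} : k ≤ u[i]² ⬝ L}`, so that the block
`{i} × {1,...,L}` contributes exactly `u[i]² ⬝ L` elements when `u[i]²` is an
integer multiple of `1/L`.  (Here `Fin L` represents `{1,...,L}` via `k ↦ k+1`.) -/
noncomputable def expandedSupport {n : ℕ} (L : ℕ) (u : Fin n → ℝ) :
    Finset (Fin n × Fin L) :=
  Finset.univ.filter fun p => ((p.2 : ℕ) + 1 : ℝ) ≤ (u p.1) ^ 2 * L

/-- The weighted MinHash random variable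
`Z = 1[h(ℓ_U) = h(ℓ_V)] ⬝ u[j_U] v[j_V] / min(u[j_U]², v[j_V]²)`, where `ℓ_U`, `ℓ_V` are
the minimizers of the hash `h` over the expanded supports `Ū`, `V̄`, with block indices
`j_U = ℓ_U.1`, `j_V = ℓ_V.1`. -/
noncomputable def Zw {n L : ℕ} (u v : Fin n → ℝ)
    (hU : (expandedSupport L u).Nonempty) (hV : (expandedSupport L v).Nonempty)
    (h : Fin n × Fin L → ℝ) : ℝ :=
  (if h (argminOn (expandedSupport L u) hU h) = h (argminOn (expandedSupport L v) hV h)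
      then (1 : ℝ) else 0) *
    (u (argminOn (expandedSupport L u) hU h).1 * v (argminOn (expandedSupport L v) hV h).1 /
      min ((u (argminOn (expandedSupport L u) hU h).1) ^ 2)
        ((v (argminOn (expandedSupport L v) hV h).1) ^ 2))

/-- `m` mutually independent uniform hash families on `J`. -/
noncomputable def hashFamilies (m : ℕ) (J : Type*) [Fintype J] :
    Measure (Fin m → J → ℝ) :=
  Measure.pi fun _ : Fin m => uniformHash J

/-- The Euclidean norm `‖x‖ = √(∑ i, x i ^ 2)` of a vector `x : Fin n → ℝ`. -/
noncomputable def vnorm {n : ℕ} (x : Fin n → ℝ) : ℝ :=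
  Real.sqrt (∑ i, (x i) ^ 2)

/-- `‖x_S‖`: the Euclidean norm of the vector `x` restricted to the index set `S`
(agreeing with `x` on `S` and zero elsewhere). -/
noncomputable def vnormOn {n : ℕ} (S : Finset (Fin n)) (x : Fin n → ℝ) : ℝ :=
  Real.sqrt (∑ i ∈ S, (x i) ^ 2)

/-- The support `{i : x i ≠ 0}` of a vector, as a `Finset`. -/
noncomputable def supp {n : ℕ} (x : Fin n → ℝ) : Finset (Fin n) :=
  Finset.univ.filter fun i => x i ≠ 0


open ProbabilityTheory

instance uniformHash_prob (J : Type*) [Fintype J] : IsProbabilityMeasure (uniformHash J) := by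
  unfold uniformHash
  have : IsProbabilityMeasure ((volume : Measure ℝ).restrict (Set.Icc 0 1)) := ⟨by simp⟩
  infer_instance

theorem uh_ae_inj (J : Type*) [Fintype J] : ∀ᵐ h ∂(uniformHash J), Function.Injective h := by
  classical
  have h1 : ∀ j k : J, j ≠ k → ∀ᵐ h ∂(uniformHash J), h j ≠ h k := by
    intro j k hjk
    have hac : uniformHash J ≪ (volume : Measure (J → ℝ)) := by
      unfold uniformHash
      rw [← Measure.restrict_pi_pi]
      exact Measure.absolutelyContinuous_of_le Measure.restrict_le_self
    apply hac.ae_le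
    let s : Submodule ℝ (J → ℝ) := LinearMap.ker
      ((LinearMap.proj j : (J → ℝ) →ₗ[ℝ] ℝ) - LinearMap.proj k)
    have hs : s ≠ ⊤ := by
      intro h
      have : (Pi.single j 1 : J → ℝ) ∈ s := by rw [h]; trivial
      simp [s, hjk] at this
    have := Measure.addHaar_submodule (volume : Measure (J → ℝ)) s hs
    change _ ∈ ae _
    rw [mem_ae_iff]
    convert this using 2
    ext h
    simp [s, sub_eq_zero]
  have h2 : ∀ᵐ h ∂(uniformHash J), ∀ j k : J, j ≠ k → h j ≠ h k := by
    rw [ae_all_iff]; intro j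
    rw [ae_all_iff]; intro k
    by_cases hjk : j = k
    · simp [hjk]
    · filter_upwards [h1 j k hjk] with h hh _ using hh
  filter_upwards [h2] with h hh j k hjk
  by_contra hne
  exact hh j k hne hjk

theorem uh_ae_mem (J : Type*) [Fintype J] : ∀ᵐ h ∂(uniformHash J), ∀ j, h j ∈ Set.Icc (0:ℝ) 1 := by
  rw [ae_all_iff]
  intro j
  have : IsProbabilityMeasure ((volume : Measure ℝ).restrict (Set.Icc 0 1)) := ⟨by simp⟩
  have h := (measurePreserving_eval (fun _ : J => (volume : Measure ℝ).restrict (Set.Icc 0 1)) j)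
  exact h.quasiMeasurePreserving.ae (ae_restrict_mem measurableSet_Icc)

theorem inf'_meas {J : Type*} [Fintype J] (W : Finset J) (hW : W.Nonempty) :
    Measurable (fun h : J → ℝ => W.inf' hW h) := by
  apply measurable_of_Ici
  intro t
  have hs : (fun h : J → ℝ => W.inf' hW h) ⁻¹' Set.Ici t = (W : Set J).pi (fun _ => Set.Ici t) := by
    ext h; simp [Set.mem_pi]
  rw [hs]
  exact MeasurableSet.pi W.countable_toSet (fun _ _ => measurableSet_Ici)

theorem uh_tail {J : Type*} [Fintype J] (W : Finset J) (hW : W.Nonempty) (t : ℝ) (ht : 0 < t) :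
    uniformHash J {h | t ≤ W.inf' hW h} = ENNReal.ofReal (1 - t) ^ W.card := by
  have : IsProbabilityMeasure ((volume : Measure ℝ).restrict (Set.Icc 0 1)) := ⟨by simp⟩
  have hs : {h : J → ℝ | t ≤ W.inf' hW h} = (W : Set J).pi (fun _ => Set.Ici t) := by
    ext h; simp [Set.mem_pi]
  rw [hs, uniformHash, Measure.pi_pi_finset, Finset.prod_const]
  congr 1
  rw [Measure.restrict_apply measurableSet_Ici]
  have : Set.Ici t ∩ Set.Icc 0 1 = Set.Icc t 1 := by
    ext x; simp only [Set.mem_inter_iff, Set.mem_Ici, Set.mem_Icc]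
    constructor
    · rintro ⟨a, b, c⟩; exact ⟨a, c⟩
    · rintro ⟨a, c⟩; exact ⟨a, by linarith, c⟩
  rw [this, Real.volume_Icc]

theorem uh_moment {J : Type*} [Fintype J] (W : Finset J) (hW : W.Nonempty) (q : ℕ) :
    ∫ h, (W.inf' hW h) ^ (q + 1) ∂(uniformHash J) =
      (q + 1) * ∫ t in (0:ℝ)..1, (1 - t) ^ W.card * t ^ q := by
  have hnn : 0 ≤ᵐ[uniformHash J] fun h : J → ℝ => W.inf' hW h := by
    filter_upwards [uh_ae_mem J] with h hh
    simp only [Pi.zero_apply, Finset.le_inf'_iff]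
    exact fun j _ => (hh j).1
  have key := lintegral_rpow_eq_lintegral_meas_le_mul (uniformHash J) hnn
    (inf'_meas W hW).aemeasurable (p := (q:ℝ) + 1) (by positivity)
  have h1 : ∫⁻ t in Set.Ioi (0:ℝ), uniformHash J {a : J → ℝ | t ≤ W.inf' hW a} *
      ENNReal.ofReal (t ^ ((q:ℝ) + 1 - 1)) =
      ENNReal.ofReal (∫ t in (0:ℝ)..1, (1 - t) ^ W.card * t ^ q) := by
    rw [intervalIntegral.integral_of_le zero_le_one, ofReal_integral_eq_lintegral_ofReal]
    · have : Set.Ioc (0:ℝ) 1 ⊆ Set.Ioi 0 := Set.Ioc_subset_Ioi_self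
      rw [← Set.union_sdiff_cancel this, lintegral_union (by measurability) Set.disjoint_sdiff_right]
      have hz : ∫⁻ t in Set.Ioi (0:ℝ) \ Set.Ioc 0 1, uniformHash J {a : J → ℝ | t ≤ W.inf' hW a} *
          ENNReal.ofReal (t ^ ((q:ℝ) + 1 - 1)) = 0 := by
        rw [setLIntegral_congr_fun (g := fun _ => 0) (by measurability)]
        · simp
        · rintro t ⟨ht, ht2⟩
          have ht' : (0:ℝ) < t := ht
          have h1t : 1 < t := by
            by_contra hh
            exact ht2 ⟨ht, not_lt.1 hh⟩
          simp only
          rw [uh_tail W hW t ht', ENNReal.ofReal_of_nonpos (by linarith),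
            zero_pow (Finset.card_pos.2 hW).ne', zero_mul]
      rw [hz, add_zero]
      apply setLIntegral_congr_fun measurableSet_Ioc
      rintro t ⟨ht, ht2⟩
      simp only
      rw [uh_tail W hW t ht, add_sub_cancel_right, Real.rpow_natCast,
        ← ENNReal.ofReal_pow (by linarith), ENNReal.ofReal_mul (pow_nonneg (by linarith) _)]
    · exact (Continuous.integrableOn_Ioc (by fun_prop))
    · filter_upwards [ae_restrict_mem measurableSet_Ioc] with t ht
      exact mul_nonneg (pow_nonneg (by linarith [ht.2]) _) (pow_nonneg ht.1.le _)
  rw [h1] at key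
  have hI : 0 ≤ ∫ t in (0:ℝ)..1, (1 - t) ^ W.card * t ^ q := by
    apply intervalIntegral.integral_nonneg zero_le_one
    intro t ht
    exact mul_nonneg (pow_nonneg (by linarith [ht.2]) _) (pow_nonneg ht.1 _)
  rw [integral_eq_lintegral_of_nonneg_ae]
  · have e : ∀ h : J → ℝ, (W.inf' hW h) ^ (q+1) = (W.inf' hW h) ^ ((q:ℝ)+1) := by
      intro h
      rw [← Real.rpow_natCast]; push_cast; rfl
    simp_rw [e]
    rw [key, ← ENNReal.ofReal_mul (by positivity), ENNReal.toReal_ofReal (by positivity)]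
  · filter_upwards [hnn] with h hh
    exact pow_nonneg hh _
  · exact ((inf'_meas W hW).pow_const _).aestronglyMeasurable

theorem uh_mean {J : Type*} [Fintype J] (W : Finset J) (hW : W.Nonempty) :
    ∫ h, W.inf' hW h ∂(uniformHash J) = 1 / ((W.card : ℝ) + 1) := by
  have := uh_moment W hW 0
  simp only [zero_add, pow_one, pow_zero, mul_one] at this
  rw [this, intervalIntegral.integral_comp_sub_left (fun x => x ^ W.card)]
  simp

theorem uh_second {J : Type*} [Fintype J] (W : Finset J) (hW : W.Nonempty) :
    ∫ h, (W.inf' hW h) ^ 2 ∂(uniformHash J) ≤ 2 / ((W.card : ℝ) + 1) ^ 2 := by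
  have := uh_moment W hW 1
  norm_num at this
  rw [this]
  have e : ∫ t in (0:ℝ)..1, (1 - t) ^ W.card * t = 1 / ((W.card : ℝ) + 1) - 1 / ((W.card : ℝ) + 2) := by
    have := intervalIntegral.integral_comp_sub_left (a := 0) (b := 1)
      (fun x : ℝ => x ^ W.card - x ^ (W.card + 1)) 1
    have e2 : ∀ t : ℝ, (1 - t) ^ W.card * t = (1 - t) ^ W.card - (1 - t) ^ (W.card + 1) := by
      intro t; ring
    simp_rw [e2]
    rw [this, intervalIntegral.integral_sub
      (Continuous.intervalIntegrable (by fun_prop) _ _)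
      (Continuous.intervalIntegrable (by fun_prop) _ _)]
    simp
    ring
  rw [e]
  have : (0:ℝ) ≤ W.card := by positivity
  rw [div_sub_div _ _ (by positivity) (by positivity), ← mul_div_assoc, div_le_div_iff₀ (by positivity) (by positivity)]
  nlinarith [pow_nonneg this 3, pow_nonneg this 2]

/-- The event that `ℓ` minimizes the hash over `W`. -/
def minEv {J : Type*} (W : Finset J) (l : J) : Set (J → ℝ) := {h | ∀ k ∈ W, h l ≤ h k}

theorem minEv_meas {J : Type*} [Fintype J] (W : Finset J) (l : J) : MeasurableSet (minEv W l) := by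
  have : minEv W l = ⋂ k ∈ W, {h : J → ℝ | h l ≤ h k} := by
    ext h; simp [minEv]
  rw [this]
  exact W.measurableSet_biInter fun k _ =>
    measurableSet_le (measurable_pi_apply l) (measurable_pi_apply k)

theorem minEv_unique {J : Type*} {W : Finset J} {h : J → ℝ} (hi : Function.Injective h)
    {l l' : J} (hl : l ∈ W) (hl' : l' ∈ W) (h1 : h ∈ minEv W l) (h2 : h ∈ minEv W l') : l = l' :=
  hi (le_antisymm (h1 l' hl') (h2 l hl))

theorem minEv_symm {J : Type*} [Fintype J] (W : Finset J) {l l' : J} (hl : l ∈ W) (hl' : l' ∈ W) :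
    (uniformHash J).real (minEv W l) = (uniformHash J).real (minEv W l') := by
  classical
  have hp := measurePreserving_arrowCongr'
    (fun _ : J => (volume : Measure ℝ).restrict (Set.Icc 0 1))
    (fun _ : J => (volume : Measure ℝ).restrict (Set.Icc 0 1)) (Equiv.swap l l')
    (MeasurableEquiv.refl ℝ) (fun _ => MeasurePreserving.id _)
  have hpre : (MeasurableEquiv.arrowCongr' (Equiv.swap l l') (MeasurableEquiv.refl ℝ)) ⁻¹'
      (minEv W l') = minEv W l := by
    ext h
    have e : ∀ k, (MeasurableEquiv.arrowCongr' (Equiv.swap l l') (MeasurableEquiv.refl ℝ)) h k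
        = h (Equiv.swap l l' k) := by
      intro k; rfl
    simp only [minEv, Set.mem_preimage, Set.mem_ofPred_eq, e, Equiv.swap_apply_right]
    have hmem : ∀ k ∈ W, Equiv.swap l l' k ∈ W := by
      intro k hk
      rw [Equiv.swap_apply_def]
      split_ifs <;> assumption
    constructor
    · intro H k hk
      have := H _ (hmem k hk)
      rwa [Equiv.swap_apply_self] at this
    · intro H k hk
      exact H _ (hmem k hk)
  have := hp.measure_preimage (minEv_meas W l').nullMeasurableSet
  rw [hpre] at this
  simp only [measureReal_def, uniformHash]
  rw [this]

theorem minEv_prob {J : Type*} [Fintype J] (W : Finset J) {l : J} (hl : l ∈ W) :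
    (uniformHash J).real (minEv W l) = 1 / (W.card : ℝ) := by
  classical
  have h1 : ∫ h, ∑ k ∈ W, (minEv W k).indicator (fun _ => (1:ℝ)) h ∂(uniformHash J) = 1 := by
    have : ∀ᵐ h ∂(uniformHash J), ∑ k ∈ W, (minEv W k).indicator (fun _ => (1:ℝ)) h = 1 := by
      filter_upwards [uh_ae_inj J] with h hh
      obtain ⟨k, hk, hmin⟩ := W.exists_min_image h ⟨l, hl⟩
      rw [Finset.sum_eq_single_of_mem k hk]
      · rw [Set.indicator_of_mem]; exact hmin
      · intro k' hk' hne
        rw [Set.indicator_of_notMem]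
        intro hmem
        exact hne (minEv_unique hh hk' hk hmem hmin)
    rw [integral_congr_ae this]
    simp
  rw [integral_finsetSum] at h1
  · simp only [integral_indicator_const _ (minEv_meas W _), smul_eq_mul, mul_one] at h1
    rw [Finset.sum_congr rfl (fun k hk => minEv_symm W hk hl), Finset.sum_const, nsmul_eq_mul] at h1
    have : (W.card : ℝ) ≠ 0 := by
      have := (Finset.card_pos.2 ⟨l, hl⟩).ne'
      exact_mod_cast this
    field_simp
    linarith
  · intro k _
    exact (integrable_const (1:ℝ)).indicator (minEv_meas W k)

/-- Clean version of the MinHash variable. -/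
noncomputable def Zc {J : Type*} (W D : Finset J) (c : J → ℝ) (h : J → ℝ) : ℝ :=
  ∑ l ∈ D, (minEv W l).indicator (fun _ => c l) h

theorem Zc_memLp {J : Type*} [Fintype J] (W D : Finset J) (c : J → ℝ) :
    MemLp (Zc W D c) 2 (uniformHash J) := by
  unfold Zc
  refine memLp_finsetSum _ fun l _ => ?_
  exact (memLp_const (c l)).indicator (minEv_meas W l)

theorem Zc_mean {J : Type*} [Fintype J] (W D : Finset J) (hD : D ⊆ W) (c : J → ℝ) :
    ∫ h, Zc W D c h ∂(uniformHash J) = (∑ l ∈ D, c l) / W.card := by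
  unfold Zc
  rw [integral_finsetSum]
  · simp only [integral_indicator_const _ (minEv_meas W _), smul_eq_mul]
    rw [Finset.sum_div]
    refine Finset.sum_congr rfl fun l hl => ?_
    rw [minEv_prob W (hD hl)]; ring
  · intro k _
    exact (integrable_const (c k)).indicator (minEv_meas W k)

theorem Zc_var {J : Type*} [Fintype J] (W D : Finset J) (hD : D ⊆ W) (c : J → ℝ) :
    variance (Zc W D c) (uniformHash J) ≤ (∑ l ∈ D, c l ^ 2) / W.card := by
  classical
  refine (variance_le_expectation_sq (Zc_memLp W D c).1).trans (le_of_eq ?_)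
  rw [← Zc_mean W D hD]
  apply integral_congr_ae
  filter_upwards [uh_ae_inj J] with h hh
  simp only [Pi.pow_apply, Zc]
  by_cases hex : ∃ l ∈ D, h ∈ minEv W l
  · obtain ⟨l, hl, hm⟩ := hex
    have hz : ∀ k ∈ D, k ≠ l → h ∉ minEv W k := fun k hk hne hmem =>
      hne (minEv_unique hh (hD hk) (hD hl) hmem hm)
    rw [Finset.sum_eq_single_of_mem l hl, Finset.sum_eq_single_of_mem l hl]
    · simp [hm]
    · intro k hk hne
      simp [hz k hk hne]
    · intro k hk hne
      simp [hz k hk hne]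
  · push Not at hex
    rw [Finset.sum_eq_zero, Finset.sum_eq_zero]
    · simp
    · intro k hk
      simp [hex k hk]
    · intro k hk
      simp [hex k hk]

theorem cheb {Ω : Type*} [MeasurableSpace Ω] (μ : Measure Ω) [IsProbabilityMeasure μ]
    (X : Ω → ℝ) (hX : MemLp X 2 μ) (m : ℕ) (hm : 0 < m) (K S t : ℝ) (hS : 0 ≤ S)
    (ht : 0 < t) (hV : variance X μ ≤ K * S ^ 2) :
    Measure.pi (fun _ : Fin m => μ) {H | t * S * m < |∑ i, X (H i) - m * ∫ x, X x ∂μ|} ≤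
      ENNReal.ofReal (K / (m * t ^ 2)) := by
  have hm' : (0:ℝ) < m := by exact_mod_cast hm
  set P := Measure.pi (fun _ : Fin m => μ)
  set Y : (Fin m → Ω) → ℝ := ∑ i, fun H => X (H i) with hY
  have hmem : ∀ i : Fin m, MemLp (fun H : Fin m → Ω => X (H i)) 2 P := fun i =>
    hX.comp_measurePreserving (measurePreserving_eval (fun _ : Fin m => μ) i)
  have hYm : MemLp Y 2 P := memLp_finsetSum' _ fun i _ => hmem i
  have hvar : variance Y P = m * variance X μ := by
    have := variance_sum_pi (μ := fun _ : Fin m => μ) (X := fun _ => X) (fun _ => hX)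
    rw [hY, this]; simp
  have hYa : ∀ H, Y H = ∑ i, X (H i) := fun H => by simp [hY]
  have hmean : ∫ H, Y H ∂P = m * ∫ x, X x ∂μ := by
    simp_rw [hYa]
    rw [integral_finsetSum _ (fun i _ => (hmem i).integrable (by norm_num))]
    have : ∀ i : Fin m, ∫ H : Fin m → Ω, X (H i) ∂P = ∫ x, X x ∂μ := fun i =>
      integral_comp_eval (μ := fun _ : Fin m => μ) (i := i) hX.1
    simp [this]
  simp_rw [← hYa, ← hmean]
  rcases hS.eq_or_lt with h0 | hpos
  · have hv0 : variance X μ = 0 := le_antisymm (by rw [← h0] at hV; simpa using hV) (variance_nonneg _ _)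
    have := ae_eq_integral_of_variance_eq_zero hYm (by rw [hvar, hv0, mul_zero])
    have hz : P {H | t * S * m < |Y H - ∫ H, Y H ∂P|} = 0 := by
      rw [← h0]
      have h2 : ∀ᵐ H ∂P, ¬ (t * 0 * m < |Y H - ∫ H, Y H ∂P|) := by
        filter_upwards [this] with H hH
        rw [hH]; simp
      simpa [ae_iff] using h2
    rw [hz]; exact zero_le
  · have := meas_ge_le_variance_div_sq hYm (c := t * S * m) (by positivity)
    refine le_trans (measure_mono ?_) (this.trans ?_)
    · intro H hH
      rw [Set.mem_ofPred_eq] at hH ⊢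
      exact hH.le
    apply ENNReal.ofReal_le_ofReal
    rw [hvar, div_le_div_iff₀ (by positivity) (by positivity)]
    calc m * variance X μ * (m * t ^ 2) ≤ m * (K * S ^ 2) * (m * t ^ 2) := by gcongr
      _ = K * (t * S * m) ^ 2 := by ring

theorem argminOn_mem {α : Type*} (s : Finset α) (hs : s.Nonempty) (f : α → ℝ) :
    argminOn s hs f ∈ s := (s.exists_min_image f hs).choose_spec.1

theorem argminOn_le {α : Type*} (s : Finset α) (hs : s.Nonempty) (f : α → ℝ) :
    ∀ k ∈ s, f (argminOn s hs f) ≤ f k := (s.exists_min_image f hs).choose_spec.2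

theorem argmin_inf {α : Type*} [DecidableEq α] (s t : Finset α) (hs : s.Nonempty) (ht : t.Nonempty)
    (hW : (s ∪ t).Nonempty) (f : α → ℝ) :
    min (f (argminOn s hs f)) (f (argminOn t ht f)) = (s ∪ t).inf' hW f := by
  apply le_antisymm
  · rw [Finset.le_inf'_iff]
    intro k hk
    rcases Finset.mem_union.1 hk with h | h
    · exact (min_le_left _ _).trans (argminOn_le s hs f k h)
    · exact (min_le_right _ _).trans (argminOn_le t ht f k h)
  · apply le_min
    · exact Finset.inf'_le _ (Finset.mem_union_left _ (argminOn_mem s hs f))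
    · exact Finset.inf'_le _ (Finset.mem_union_right _ (argminOn_mem t ht f))

/-- The value attached to block `j`. -/
noncomputable def cval {n : ℕ} (u v : Fin n → ℝ) (j : Fin n) : ℝ :=
  u j * v j / min (u j ^ 2) (v j ^ 2)

theorem Zw_eq {n L : ℕ} (u v : Fin n → ℝ)
    (hU : (expandedSupport L u).Nonempty) (hV : (expandedSupport L v).Nonempty)
    (h : Fin n × Fin L → ℝ) (hi : Function.Injective h) :
    Zw u v hU hV h = Zc (expandedSupport L u ∪ expandedSupport L v)
      (expandedSupport L u ∩ expandedSupport L v) (fun l => cval u v l.1) h := by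
  unfold Zw Zc
  set U := expandedSupport L u
  set V := expandedSupport L v
  have hp := argminOn_mem U hU h
  have hq := argminOn_mem V hV h
  have hp2 := argminOn_le U hU h
  have hq2 := argminOn_le V hV h
  set p := argminOn U hU h
  set q := argminOn V hV h
  by_cases hpq : h p = h q
  · have e : p = q := hi hpq
    rw [← e] at hq hq2 ⊢
    have hm : h ∈ minEv (U ∪ V) p := by
      intro k hk
      rcases Finset.mem_union.1 hk with h | h
      · exact hp2 k h
      · exact hq2 k h
    rw [Finset.sum_eq_single_of_mem p (Finset.mem_inter.2 ⟨hp, hq⟩)]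
    · rw [if_pos rfl, one_mul]
      exact (Set.indicator_of_mem hm (fun _ => cval u v p.1)).symm
    · intro k hk hne
      rw [Set.indicator_of_notMem]
      intro hmem
      exact hne (minEv_unique hi (Finset.mem_union_left _ (Finset.mem_inter.1 hk).1)
        (Finset.mem_union_left _ hp) hmem hm)
  · rw [if_neg hpq, zero_mul, Finset.sum_eq_zero]
    intro k hk
    rw [Set.indicator_of_notMem]
    intro hmem
    obtain ⟨hkU, hkV⟩ := Finset.mem_inter.1 hk
    apply hpq
    rw [le_antisymm (hp2 k hkU) (hmem p (Finset.mem_union_left _ hp)),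
      le_antisymm (hq2 k hkV) (hmem q (Finset.mem_union_right _ hq))]

theorem count_lem {n L : ℕ} (w : Fin n → ℝ) (hw0 : ∀ i, 0 ≤ w i) (hw1 : ∀ i, w i ≤ 1)
    (hwk : ∀ i, ∃ k : ℤ, w i * L = k) (g : Fin n → ℝ) :
    ∑ p ∈ (Finset.univ : Finset (Fin n × Fin L)).filter
      (fun p => ((p.2 : ℕ) + 1 : ℝ) ≤ w p.1 * L), g p.1 = ∑ j, g j * (w j * L) := by
  rw [Finset.sum_filter, Fintype.sum_prod_type]
  refine Finset.sum_congr rfl fun j _ => ?_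
  obtain ⟨k, hk⟩ := hwk j
  have hLnn : (0:ℝ) ≤ L := by positivity
  have hk0 : 0 ≤ k := by
    have : (0:ℝ) ≤ k := by rw [← hk]; exact mul_nonneg (hw0 j) hLnn
    exact_mod_cast this
  obtain ⟨K, rfl⟩ := Int.eq_ofNat_of_zero_le hk0
  have hKL : K ≤ L := by
    have : (K:ℝ) ≤ L := by
      have := mul_le_mul_of_nonneg_right (hw1 j) hLnn
      rw [hk] at this
      simpa using this
    exact_mod_cast this
  simp only
  rw [hk]
  have e : ∀ x : Fin L, (((x : ℕ) + 1 : ℝ) ≤ ((K : ℤ) : ℝ)) ↔ (x : ℕ) < K := by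
    intro x
    rw [Int.cast_natCast]
    constructor
    · intro h
      have : (x : ℕ) + 1 ≤ K := by exact_mod_cast h
      omega
    · intro h
      have : (x : ℕ) + 1 ≤ K := by omega
      exact_mod_cast this
  simp only [e]
  rw [Fin.sum_univ_eq_sum_range (fun x => if x < K then g j else 0) L, ← Finset.sum_filter]
  have : (Finset.range L).filter (fun x => x < K) = Finset.range K := by
    ext x; simp; omega
  rw [this]
  simp [mul_comm]

theorem arith_lem (N L m d S s ε τ ζ : ℝ) (hL : 1 ≤ L) (hN : L ≤ N) (hN2 : N ≤ 2 * L) (hm : 0 < m)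
    (hd : |d| ≤ S) (hs : s = ε / 14) (hε : 0 < ε) (hε1 : ε < 1)
    (hτ : |τ - m * (1 / (N + 1))| ≤ s * (1 / (N + 1)) * m)
    (hζ : |ζ - m * (L * d / N)| ≤ s * S * m) :
    |((1 / L) * (m / τ - 1)) / m * ζ - d| ≤ ε * S := by
  have hN0 : 0 < N := by linarith
  have hL0 : 0 < L := by linarith
  have hs0 : 0 < s := by rw [hs]; positivity
  have hs1 : s ≤ 1 / 14 := by rw [hs]; linarith
  have hS : 0 ≤ S := (abs_nonneg _).trans hd
  obtain ⟨x, hx⟩ : ∃ x, x = τ * (N + 1) / m := ⟨_, rfl⟩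
  have hτx : τ = x * m / (N + 1) := by rw [hx]; field_simp
  have hx1 : |x - 1| ≤ s := by
    have e : τ - m * (1 / (N + 1)) = (x - 1) * (m / (N + 1)) := by rw [hτx]; ring
    have e2 : s * (1 / (N + 1)) * m = s * (m / (N + 1)) := by ring
    rw [e, e2, abs_mul, abs_of_pos (by positivity : 0 < m / (N + 1))] at hτ
    exact le_of_mul_le_mul_right hτ (by positivity)
  obtain ⟨f, hf⟩ : ∃ f, f = ζ / m - L * d / N := ⟨_, rfl⟩
  have hζf : ζ = m * (f + L * d / N) := by rw [hf]; field_simp; ring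
  have hf1 : |f| ≤ s * S := by
    have e : ζ - m * (L * d / N) = f * m := by rw [hζf]; ring
    rw [e, abs_mul, abs_of_pos hm] at hζ
    exact le_of_mul_le_mul_right hζ hm
  have hxpos : 1 / 2 ≤ x := by
    have := (abs_le.1 hx1).1
    linarith
  have hx0 : 0 < x := by linarith
  obtain ⟨e, he⟩ : ∃ e, e = (N + 1) / L * ((1 - x) / x) := ⟨_, rfl⟩
  have he1 : |e| ≤ 6 * s := by
    rw [he, abs_mul, abs_div, abs_div, abs_of_pos hx0, abs_of_pos hL0, abs_of_pos (by linarith : 0 < N + 1)]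
    have h1 : (N + 1) / L ≤ 3 := by rw [div_le_iff₀ hL0]; linarith
    have h2 : |1 - x| / x ≤ 2 * s := by
      rw [div_le_iff₀ hx0, abs_sub_comm]
      nlinarith
    calc (N + 1) / L * (|1 - x| / x) ≤ 3 * (2 * s) := by gcongr
      _ = 6 * s := by ring
  have hexp : ((1 / L) * (m / τ - 1)) / m * ζ - d = N / L * f + e * (L / N * d) + e * f := by
    rw [hτx, hζf, he]
    field_simp
    ring
  rw [hexp]
  have a1 : |N / L * f| ≤ 2 * (s * S) := by
    rw [abs_mul, abs_of_pos (by positivity : 0 < N / L)]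
    have : N / L ≤ 2 := by rw [div_le_iff₀ hL0]; linarith
    gcongr
  have a2 : |e * (L / N * d)| ≤ 6 * s * (1 * S) := by
    rw [abs_mul, abs_mul, abs_of_pos (by positivity : 0 < L / N)]
    have : L / N ≤ 1 := by rw [div_le_iff₀ hN0]; linarith
    gcongr
  have a3 : |e * f| ≤ 6 * s * (1 * S) := by
    rw [abs_mul]
    have : |f| ≤ 1 * S := hf1.trans (by gcongr; linarith)
    gcongr
  calc _ ≤ |N / L * f| + |e * (L / N * d)| + |e * f| := abs_add_three _ _ _
    _ ≤ 2 * (s * S) + 6 * s * (1 * S) + 6 * s * (1 * S) := by gcongr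
    _ = ε * S := by rw [hs]; ring

theorem core {n L m : ℕ} (hL : 0 < L) (u v : Fin n → ℝ) (hu1 : ∑ i, u i ^ 2 = 1)
    (hv1 : ∑ i, v i ^ 2 = 1)
    (huk : ∀ i, ∃ k : ℤ, (u i) ^ 2 = (k : ℝ) / L) (hvk : ∀ i, ∃ k : ℤ, (v i) ^ 2 = (k : ℝ) / L)
    (hU : (expandedSupport L u).Nonempty) (hV : (expandedSupport L v).Nonempty)
    (ε : ℝ) (hε : ε ∈ Set.Ioo (0:ℝ) 1) (hm : 1764 / ε ^ 2 ≤ (m:ℝ))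
    (I : Finset (Fin n)) (hI : ∀ j, j ∉ I → u j * v j = 0) (S : ℝ)
    (hSu : vnormOn I u ≤ S) (hSv : vnormOn I v ≤ S) :
    (2 : ℝ≥0∞) / 3 ≤
      hashFamilies m (Fin n × Fin L)
        {H : Fin m → Fin n × Fin L → ℝ |
          |(((1 / (L : ℝ)) *
              ((m : ℝ) / (∑ i, min (H i (argminOn (expandedSupport L u) hU (H i)))
                  (H i (argminOn (expandedSupport L v) hV (H i)))) - 1)) / m) *
              (∑ i, Zw u v hU hV (H i)) - ∑ k, u k * v k| ≤ ε * S} := by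
  obtain ⟨hε0, hε1⟩ := hε
  have hL' : (0:ℝ) < L := by exact_mod_cast hL
  have hm0 : (0:ℝ) < m := lt_of_lt_of_le (by positivity) hm
  have hmn : 0 < m := by exact_mod_cast hm0
  have hS0 : 0 ≤ S := (Real.sqrt_nonneg _).trans hSu
  have hIu : ∑ i ∈ I, u i ^ 2 ≤ S ^ 2 := by
    have := pow_le_pow_left₀ (Real.sqrt_nonneg _) hSu 2
    rwa [Real.sq_sqrt (Finset.sum_nonneg fun _ _ => sq_nonneg _)] at this
  have hIv : ∑ i ∈ I, v i ^ 2 ≤ S ^ 2 := by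
    have := pow_le_pow_left₀ (Real.sqrt_nonneg _) hSv 2
    rwa [Real.sq_sqrt (Finset.sum_nonneg fun _ _ => sq_nonneg _)] at this
  set U := expandedSupport L u with hUdef
  set V := expandedSupport L v with hVdef
  set d := ∑ k, u k * v k with hd
  have hu_le : ∀ i, u i ^ 2 ≤ 1 := fun i => by
    rw [← hu1]; exact Finset.single_le_sum (f := fun i => u i ^ 2) (fun _ _ => sq_nonneg _) (Finset.mem_univ i)
  have hv_le : ∀ i, v i ^ 2 ≤ 1 := fun i => by
    rw [← hv1]; exact Finset.single_le_sum (f := fun i => v i ^ 2) (fun _ _ => sq_nonneg _) (Finset.mem_univ i)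
  have huk' : ∀ i, ∃ k : ℤ, u i ^ 2 * L = k := fun i => by
    obtain ⟨k, hk⟩ := huk i; exact ⟨k, by rw [hk]; field_simp⟩
  have hvk' : ∀ i, ∃ k : ℤ, v i ^ 2 * L = k := fun i => by
    obtain ⟨k, hk⟩ := hvk i; exact ⟨k, by rw [hk]; field_simp⟩
  have cU : (U.card : ℝ) = L := by
    have := count_lem (L := L) (fun i => u i ^ 2) (fun _ => sq_nonneg _) hu_le huk' (fun _ => 1)
    simp only [one_mul] at this
    rw [← Finset.sum_mul, hu1, one_mul, Finset.sum_const, nsmul_eq_mul, mul_one] at this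
    exact this
  have cV : (V.card : ℝ) = L := by
    have := count_lem (L := L) (fun i => v i ^ 2) (fun _ => sq_nonneg _) hv_le hvk' (fun _ => 1)
    simp only [one_mul] at this
    rw [← Finset.sum_mul, hv1, one_mul, Finset.sum_const, nsmul_eq_mul, mul_one] at this
    exact this
  have hW : (U ∪ V).Nonempty := hU.mono Finset.subset_union_left
  have hDW : U ∩ V ⊆ U ∪ V := Finset.inter_subset_union
  have cW1 : (L:ℝ) ≤ ((U ∪ V).card : ℝ) := by
    rw [← cU]; exact_mod_cast Finset.card_le_card Finset.subset_union_left
  have cW2 : ((U ∪ V).card : ℝ) ≤ 2 * L := by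
    have : ((U ∪ V).card : ℝ) ≤ U.card + V.card := by exact_mod_cast Finset.card_union_le U V
    rw [cU, cV] at this; linarith
  set N : ℝ := ((U ∪ V).card : ℝ) with hN
  have hN0 : 0 < N := by linarith
  have hinter : ∀ g : Fin n → ℝ, ∑ p ∈ U ∩ V, g p.1 = ∑ j, g j * (min (u j ^ 2) (v j ^ 2) * L) := by
    intro g
    rw [← count_lem (L := L) (fun i => min (u i ^ 2) (v i ^ 2))
      (fun _ => le_min (sq_nonneg _) (sq_nonneg _))
      (fun i => (min_le_left _ _).trans (hu_le i))
      (fun i => by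
        rcases min_choice (u i ^ 2) (v i ^ 2) with h | h
        · simp only [h]; exact huk' i
        · simp only [h]; exact hvk' i) g]
    refine Finset.sum_congr ?_ fun _ _ => rfl
    ext p
    simp only [hUdef, hVdef, expandedSupport, Finset.mem_inter, Finset.mem_filter,
      Finset.mem_univ, true_and]
    rw [min_mul_of_nonneg _ _ hL'.le, le_min_iff]
  have hc1 : ∀ j, cval u v j * min (u j ^ 2) (v j ^ 2) = u j * v j := by
    intro j
    unfold cval
    by_cases h0 : u j * v j = 0
    · rw [h0]; simp
    · have hu0 : u j ≠ 0 := left_ne_zero_of_mul h0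
      have hv0 : v j ≠ 0 := right_ne_zero_of_mul h0
      have : 0 < min (u j ^ 2) (v j ^ 2) := lt_min (by positivity) (by positivity)
      field_simp
  have hc2 : ∀ j, cval u v j ^ 2 * min (u j ^ 2) (v j ^ 2) ≤
      if j ∈ I then u j ^ 2 + v j ^ 2 else 0 := by
    intro j
    by_cases h0 : u j * v j = 0
    · have : cval u v j = 0 := by unfold cval; rw [h0, zero_div]
      rw [this]
      split_ifs <;> simp <;> positivity
    · have hj : j ∈ I := by by_contra h; exact h0 (hI j h)
      rw [if_pos hj]
      have hu0 : u j ≠ 0 := left_ne_zero_of_mul h0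
      have hv0 : v j ≠ 0 := right_ne_zero_of_mul h0
      have hmin : 0 < min (u j ^ 2) (v j ^ 2) := lt_min (by positivity) (by positivity)
      have hmm := min_mul_max (u j ^ 2) (v j ^ 2)
      have hmax : max (u j ^ 2) (v j ^ 2) ≤ u j ^ 2 + v j ^ 2 :=
        max_le (by nlinarith [sq_nonneg (v j)]) (by nlinarith [sq_nonneg (u j)])
      have : cval u v j ^ 2 * min (u j ^ 2) (v j ^ 2) = max (u j ^ 2) (v j ^ 2) := by
        unfold cval
        field_simp
        linarith
      rw [this]; exact hmax
  have hmeanZ : ∫ h, Zc (U ∪ V) (U ∩ V) (fun l => cval u v l.1) h ∂(uniformHash (Fin n × Fin L))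
      = L * d / N := by
    rw [Zc_mean _ _ hDW, hinter (cval u v), hd, Finset.mul_sum]
    congr 1
    refine Finset.sum_congr rfl fun j _ => ?_
    rw [← hc1 j]; ring
  have hvarZ : variance (Zc (U ∪ V) (U ∩ V) (fun l => cval u v l.1))
      (uniformHash (Fin n × Fin L)) ≤ 2 * S ^ 2 := by
    refine (Zc_var _ _ hDW _).trans ?_
    rw [hinter (fun j => cval u v j ^ 2), div_le_iff₀ hN0]
    simp_rw [← mul_assoc]
    rw [← Finset.sum_mul]
    have : ∑ j, cval u v j ^ 2 * min (u j ^ 2) (v j ^ 2) ≤ 2 * S ^ 2 := by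
      refine (Finset.sum_le_sum fun j _ => hc2 j).trans ?_
      rw [← Finset.sum_filter, Finset.sum_add_distrib]
      simp only [Finset.filter_mem_eq_inter, Finset.univ_inter]
      linarith
    calc _ ≤ (2 * S ^ 2) * (L:ℝ) := by gcongr
      _ ≤ _ := by gcongr
  have hdS : |d| ≤ S := by
    have hdI : d = ∑ k ∈ I, u k * v k := by
      rw [hd]; symm
      exact Finset.sum_subset (Finset.subset_univ _) fun j _ hj => hI j hj
    apply abs_le_of_sq_le_sq _ hS0
    rw [hdI]
    refine (Finset.sum_mul_sq_le_sq_mul_sq I u v).trans ?_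
    have h1 : ∑ i ∈ I, v i ^ 2 ≤ 1 := by
      rw [← hv1]
      exact Finset.sum_le_sum_of_subset_of_nonneg (Finset.subset_univ _) fun _ _ _ => sq_nonneg _
    have h0 : 0 ≤ ∑ i ∈ I, v i ^ 2 := Finset.sum_nonneg fun _ _ => sq_nonneg _
    nlinarith [sq_nonneg S]
  have hTm : MemLp (fun h : Fin n × Fin L → ℝ => (U ∪ V).inf' hW h) 2
      (uniformHash (Fin n × Fin L)) := by
    refine MemLp.of_bound (inf'_meas _ hW).aestronglyMeasurable 1 ?_
    filter_upwards [uh_ae_mem (Fin n × Fin L)] with h hh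
    obtain ⟨k, hk, e⟩ := Finset.exists_mem_eq_inf' hW h
    rw [e, Real.norm_eq_abs, abs_le]
    exact ⟨by linarith [(hh k).1], (hh k).2⟩
  have hTv : variance (fun h : Fin n × Fin L → ℝ => (U ∪ V).inf' hW h)
      (uniformHash (Fin n × Fin L)) ≤ 1 * (1 / (N + 1)) ^ 2 := by
    rw [variance_eq_sub hTm, uh_mean]
    have := uh_second (U ∪ V) hW
    simp only [Pi.pow_apply]
    have e : 2 / (N + 1) ^ 2 = 1 * (1 / (N + 1)) ^ 2 + (1 / (N + 1)) ^ 2 := by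
      field_simp
      norm_num
    rw [← hN] at this ⊢
    linarith
  have hs0 : 0 < ε / 14 := by positivity
  have b1 := cheb (uniformHash (Fin n × Fin L)) _ hTm m hmn 1 (1 / (N + 1)) (ε / 14)
    (by positivity) hs0 hTv
  have b2 := cheb (uniformHash (Fin n × Fin L)) _ (Zc_memLp (U ∪ V) (U ∩ V)
    (fun l => cval u v l.1)) m hmn 2 S (ε / 14) hS0 hs0 hvarZ
  rw [uh_mean, ← hN] at b1
  rw [hmeanZ] at b2
  change _ ≤ Measure.pi (fun _ : Fin m => uniformHash (Fin n × Fin L)) _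
  set P := Measure.pi (fun _ : Fin m => uniformHash (Fin n × Fin L)) with hP
  have b3 : P {H | ¬ ∀ i, Function.Injective (H i)} = 0 := by
    have : ∀ᵐ H ∂P, ∀ i, Function.Injective (H i) := by
      rw [ae_all_iff]; intro i
      exact (measurePreserving_eval (fun _ : Fin m => uniformHash (Fin n × Fin L))
        i).quasiMeasurePreserving.ae (uh_ae_inj _)
    exact this
  set B1 := {H : Fin m → Fin n × Fin L → ℝ | ε / 14 * (1 / (N + 1)) * m <
    |∑ i, (U ∪ V).inf' hW (H i) - m * (1 / (N + 1))|} with hB1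
  set B2 := {H : Fin m → Fin n × Fin L → ℝ | ε / 14 * S * m <
    |∑ i, Zc (U ∪ V) (U ∩ V) (fun l => cval u v l.1) (H i) - m * (L * d / N)|} with hB2
  set B3 := {H : Fin m → Fin n × Fin L → ℝ | ¬ ∀ i, Function.Injective (H i)} with hB3
  set G := {H : Fin m → Fin n × Fin L → ℝ |
          |(((1 / (L : ℝ)) *
              ((m : ℝ) / (∑ i, min (H i (argminOn U hU (H i)))
                  (H i (argminOn V hV (H i)))) - 1)) / m) *
              (∑ i, Zw u v hU hV (H i)) - d| ≤ ε * S} with hG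
  have hsub : Gᶜ ⊆ B1 ∪ B2 ∪ B3 := by
    intro H hH
    by_contra hc
    simp only [Set.mem_union, not_or] at hc
    obtain ⟨⟨h1, h2⟩, h3⟩ := hc
    rw [hB1, Set.mem_ofPred_eq] at h1
    rw [hB2, Set.mem_ofPred_eq] at h2
    rw [hB3, Set.mem_ofPred_eq] at h3
    have h1' := not_lt.1 h1
    have h2' := not_lt.1 h2
    have h3' : ∀ i, Function.Injective (H i) := not_not.1 h3
    apply hH
    have e1 : ∑ i, min (H i (argminOn U hU (H i))) (H i (argminOn V hV (H i))) =
        ∑ i, (U ∪ V).inf' hW (H i) :=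
      Finset.sum_congr rfl fun i _ => argmin_inf U V hU hV hW (H i)
    have e2 : ∑ i, Zw u v hU hV (H i) = ∑ i, Zc (U ∪ V) (U ∩ V) (fun l => cval u v l.1) (H i) :=
      Finset.sum_congr rfl fun i _ => Zw_eq u v hU hV (H i) (h3' i)
    rw [hG, Set.mem_ofPred_eq, e1, e2]
    exact arith_lem N L m d S (ε / 14) ε _ _ (by exact_mod_cast hL) cW1 cW2 hm0 hdS rfl hε0 hε1
      h1' h2'
  have hGc : P Gᶜ ≤ ENNReal.ofReal (1 / 3) := by
    calc P Gᶜ ≤ P (B1 ∪ B2 ∪ B3) := measure_mono hsub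
      _ ≤ P B1 + P B2 + P B3 := (measure_union_le _ _).trans (by gcongr; exact measure_union_le _ _)
      _ ≤ ENNReal.ofReal (1 / (m * (ε / 14) ^ 2)) + ENNReal.ofReal (2 / (m * (ε / 14) ^ 2)) + 0 := by
          gcongr
          exact b3.le
      _ = ENNReal.ofReal (1 / (m * (ε / 14) ^ 2) + 2 / (m * (ε / 14) ^ 2)) := by
          rw [add_zero, ENNReal.ofReal_add (by positivity) (by positivity)]
      _ ≤ ENNReal.ofReal (1 / 3) := by
          apply ENNReal.ofReal_le_ofReal
          rw [← add_div, div_le_div_iff₀ (by positivity) (by norm_num)]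
          rw [div_le_iff₀ (by positivity)] at hm
          nlinarith
  have htot : ENNReal.ofReal (2 / 3) + ENNReal.ofReal (1 / 3) ≤ P G + ENNReal.ofReal (1 / 3) := by
    calc ENNReal.ofReal (2 / 3) + ENNReal.ofReal (1 / 3) = 1 := by
          rw [← ENNReal.ofReal_add (by norm_num) (by norm_num)]; norm_num
      _ = P Set.univ := measure_univ.symm
      _ ≤ P G + P Gᶜ := measure_univ_le_add_compl G
      _ ≤ _ := by gcongr
  have := (ENNReal.add_le_add_iff_right ENNReal.ofReal_ne_top).1 htot
  rw [ENNReal.ofReal_div_of_pos (by norm_num)] at this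
  simpa using this

theorem vnorm_pos {n : ℕ} (a : Fin n → ℝ) (ha : a ≠ 0) : 0 < vnorm a := by
  apply Real.sqrt_pos.2
  obtain ⟨i, hi⟩ := Function.ne_iff.1 ha
  have hi' : a i ≠ 0 := hi
  exact Finset.sum_pos' (fun _ _ => sq_nonneg _) ⟨i, Finset.mem_univ i, by positivity⟩

theorem vnorm_unit {n : ℕ} (a : Fin n → ℝ) (ha : a ≠ 0) : ∑ i, (a i / vnorm a) ^ 2 = 1 := by
  have h := vnorm_pos a ha
  have e : vnorm a ^ 2 = ∑ i, a i ^ 2 := Real.sq_sqrt (Finset.sum_nonneg fun _ _ => sq_nonneg _)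
  simp_rw [div_pow]
  rw [← Finset.sum_div, ← e]
  field_simp

theorem vnormOn_scale {n : ℕ} (I : Finset (Fin n)) (a : Fin n → ℝ) (A : ℝ) (hA : 0 < A) :
    vnormOn I (fun i => a i / A) = vnormOn I a / A := by
  unfold vnormOn
  simp_rw [div_pow]
  rw [← Finset.sum_div, Real.sqrt_div' _ (sq_nonneg _), Real.sqrt_sq hA.le]

/-- Weighted MinHash inner product estimation for discrete vectors: there is an absolute
constant `C > 0` such that for nonzero `a, b ∈ ℝⁿ` whose normalized squared entries are
integer multiples of `1/L`, `ε ∈ (0,1)`, an integer `m ≥ C/ε²`, and `m` mutually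
independent uniform hash families on `{1,...,n} × {1,...,L}`, the estimate
`F = ‖a‖ ‖b‖ (M̃/m) ∑ᵢ Zᵢ` with `M̃ = (1/L)(m / ∑ᵢ min(hⁱ(ℓ_Uⁱ), hⁱ(ℓ_Vⁱ)) - 1)`
satisfies `|F - ⟨a,b⟩| ≤ ε max(‖a_I‖ ‖b‖, ‖a‖ ‖b_I‖)` with probability at least `2/3`,
where `I = supp a ∩ supp b`. -/
theorem weighted_minhash_estimator_discrete :
    ∃ C : ℝ, 0 < C ∧
      ∀ (n L : ℕ), 0 < L →
      ∀ (a b : Fin n → ℝ), a ≠ 0 → b ≠ 0 →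
      ∀ u v : Fin n → ℝ,
        u = (fun i => a i / vnorm a) → v = (fun i => b i / vnorm b) →
      (∀ i, ∃ k : ℤ, (u i) ^ 2 = (k : ℝ) / L) →
      (∀ i, ∃ k : ℤ, (v i) ^ 2 = (k : ℝ) / L) →
      ∀ (hU : (expandedSupport L u).Nonempty) (hV : (expandedSupport L v).Nonempty),
      ∀ ε : ℝ, ε ∈ Set.Ioo (0 : ℝ) 1 →
      ∀ m : ℕ, C / ε ^ 2 ≤ (m : ℝ) →
        (2 : ℝ≥0∞) / 3 ≤
          hashFamilies m (Fin n × Fin L)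
            {H : Fin m → Fin n × Fin L → ℝ |
              |vnorm a * vnorm b *
                  (((1 / (L : ℝ)) *
                      ((m : ℝ) / (∑ i, min (H i (argminOn (expandedSupport L u) hU (H i)))
                          (H i (argminOn (expandedSupport L v) hV (H i)))) - 1)) / m) *
                  (∑ i, Zw u v hU hV (H i)) - ∑ k, a k * b k|
                ≤ ε * max (vnormOn (supp a ∩ supp b) a * vnorm b)
                    (vnorm a * vnormOn (supp a ∩ supp b) b)} := by
  refine ⟨1764, by norm_num, ?_⟩
  intro n L hL a b ha hb u v hu hv huk hvk hU hV ε hε m hm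
  have hA := vnorm_pos a ha
  have hB := vnorm_pos b hb
  set A := vnorm a with hAdef
  set B := vnorm b with hBdef
  set I := supp a ∩ supp b with hIdef
  have hI : ∀ j, j ∉ I → u j * v j = 0 := by
    intro j hj
    have : a j = 0 ∨ b j = 0 := by
      by_contra hc
      rw [not_or] at hc
      exact hj (by simp [hIdef, supp, hc.1, hc.2])
    rcases this with h | h <;> simp [hu, hv, h]
  have key := core hL u v (by rw [hu]; exact vnorm_unit a ha) (by rw [hv]; exact vnorm_unit b hb)
    huk hvk hU hV ε hε hm I hI (max (vnormOn I u) (vnormOn I v)) (le_max_left _ _) (le_max_right _ _)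
  refine key.trans (measure_mono ?_)
  intro H hH
  rw [Set.mem_ofPred_eq] at hH ⊢
  have hH' := mul_le_mul_of_nonneg_left hH (mul_pos hA hB).le
  have eR : ε * max (vnormOn I a * B) (A * vnormOn I b) =
      A * B * (ε * max (vnormOn I u) (vnormOn I v)) := by
    rw [hu, hv, vnormOn_scale I a A hA, vnormOn_scale I b B hB, mul_left_comm,
      mul_max_of_nonneg _ _ (mul_pos hA hB).le]
    congr 2 <;> field_simp
  have eD : ∑ k, a k * b k = A * B * ∑ k, u k * v k := by
    rw [Finset.mul_sum]
    refine Finset.sum_congr rfl fun k _ => ?_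
    rw [hu, hv]
    field_simp
  rw [eR, eD]
  refine le_trans (le_of_eq ?_) hH'
  rw [← abs_of_pos (mul_pos hA hB), ← abs_mul, abs_of_pos (mul_pos hA hB)]
  congr 1
  ring
end

section
/- Let z ∈ ℝⁿ be a nonzero unit vector and let L be a positive integer. Then Round(z,L) is a unit vector, every squared entry of Round(z,L) is an integer multiple of 1/L, and every index i with z[i] = 0 satisfies Round(z,L)[i] = 0. -/
open Finset

/-- An index `i*` maximizing `|z i|`. -/
noncomputable def maxIndex {n : ℕ} [NeZero n] (z : Fin n → ℝ) : Fin n :=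
  (Finset.exists_max_image Finset.univ (fun i => |z i|)
    (Finset.univ_nonempty_iff.mpr ⟨⟨0, Nat.pos_of_ne_zero (NeZero.ne n)⟩⟩)).choose

/-- `Round(z, L)`: first set `z̃ i = sign(z i) ⬝ √(⌊z i ^ 2 ⬝ L⌋ / L)` for every `i`; then,
letting `i*` be an index maximizing `|z i|` and `δ = 1 - ∑ i, z̃ i ^ 2`, replace `z̃ i*` by
`sign(z i*) ⬝ √(z̃ i* ^ 2 + δ)`. -/
noncomputable def roundVec {n : ℕ} (z : Fin n → ℝ) (L : ℕ) : Fin n → ℝ :=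
  if hn : n = 0 then z
  else
    haveI : NeZero n := ⟨hn⟩
    let zt : Fin n → ℝ := fun i => Real.sign (z i) * Real.sqrt ((⌊(z i) ^ 2 * L⌋ : ℝ) / L)
    let istar : Fin n := maxIndex z
    fun i => if i = istar then
        Real.sign (z istar) * Real.sqrt ((zt istar) ^ 2 + (1 - ∑ j, (zt j) ^ 2))
      else zt i

/-- For a nonzero unit vector `z ∈ ℝⁿ` and a positive integer `L`: `Round(z, L)` is a unit
vector, every squared entry of `Round(z, L)` is an integer multiple of `1/L`, and every
index `i` with `z i = 0` satisfies `Round(z, L) i = 0`. -/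
theorem roundVec_unit_multiples_zero {n : ℕ} (z : Fin n → ℝ) (hz0 : z ≠ 0)
    (hz1 : ∑ i, (z i) ^ 2 = 1) (L : ℕ) (hL : 0 < L) :
    (∑ i, (roundVec z L i) ^ 2 = 1)
    ∧ (∀ i, ∃ k : ℤ, (roundVec z L i) ^ 2 = (k : ℝ) / L)
    ∧ (∀ i, z i = 0 → roundVec z L i = 0) := by
  have hn : n ≠ 0 := by
    rintro rfl
    simp at hz1
  haveI : NeZero n := ⟨hn⟩
  have hLr : (0 : ℝ) < L := by exact_mod_cast hL
  obtain ⟨s, hs⟩ : ∃ s, s = maxIndex z := ⟨_, rfl⟩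
  have hmax : ∀ i, |z i| ≤ |z s| := by
    intro i
    rw [hs]
    exact (Finset.exists_max_image Finset.univ (fun i => |z i|)
      (Finset.univ_nonempty_iff.mpr
        ⟨⟨0, Nat.pos_of_ne_zero (NeZero.ne n)⟩⟩)).choose_spec.2 i (Finset.mem_univ i)
  have hzs : z s ≠ 0 := by
    intro h
    apply hz0
    funext i
    have := hmax i
    rw [h, abs_zero] at this
    exact abs_nonpos_iff.mp this
  have hsign : ∀ x : ℝ, x ≠ 0 → Real.sign x ^ 2 = 1 := by
    intro x hx
    rcases Real.sign_apply_eq_of_ne_zero x hx with h | h <;> rw [h] <;> norm_num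
  obtain ⟨zt, hzt⟩ : ∃ zt : Fin n → ℝ, zt = fun i =>
    Real.sign (z i) * Real.sqrt ((⌊(z i) ^ 2 * L⌋ : ℝ) / L) := ⟨_, rfl⟩
  have hfl : ∀ i, (0 : ℝ) ≤ (⌊(z i) ^ 2 * L⌋ : ℝ) := by
    intro i
    exact_mod_cast Int.floor_nonneg.mpr (by positivity)
  have hsq : ∀ i, zt i ^ 2 = (⌊(z i) ^ 2 * L⌋ : ℝ) / L := by
    intro i
    rw [hzt]
    by_cases h : z i = 0
    · simp [h]
    · simp only [mul_pow]
      rw [hsign _ h, Real.sq_sqrt (div_nonneg (hfl i) hLr.le), one_mul]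
  have hle : ∑ j, zt j ^ 2 ≤ 1 := by
    rw [← hz1]
    apply Finset.sum_le_sum
    intro i _
    rw [hsq, div_le_iff₀ hLr]
    exact Int.floor_le _
  have hr : ∀ i, roundVec z L i = if i = s then
      Real.sign (z s) * Real.sqrt ((zt s) ^ 2 + (1 - ∑ j, (zt j) ^ 2)) else zt i := by
    intro i
    rw [hs, hzt]
    simp only [roundVec, dif_neg hn]
  have hrs : roundVec z L s ^ 2 = (zt s) ^ 2 + (1 - ∑ j, (zt j) ^ 2) := by
    rw [hr, if_pos rfl, mul_pow, hsign _ hzs, one_mul, Real.sq_sqrt]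
    have := sq_nonneg (zt s)
    linarith
  have hrn : ∀ i, i ≠ s → roundVec z L i = zt i := by
    intro i hi
    rw [hr, if_neg hi]
  refine ⟨?_, ?_, ?_⟩
  · have h1 := Finset.add_sum_erase Finset.univ (fun i => roundVec z L i ^ 2) (Finset.mem_univ s)
    have h2 := Finset.add_sum_erase Finset.univ (fun i => zt i ^ 2) (Finset.mem_univ s)
    have h3 : ∑ i ∈ Finset.univ.erase s, roundVec z L i ^ 2
        = ∑ i ∈ Finset.univ.erase s, zt i ^ 2 :=
      Finset.sum_congr rfl fun i hi => by rw [hrn i (Finset.ne_of_mem_erase hi)]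
    linarith
  · intro i
    by_cases hi : i = s
    · subst hi
      refine ⟨⌊(z i) ^ 2 * L⌋ + (L - ∑ j, ⌊(z j) ^ 2 * L⌋), ?_⟩
      rw [hrs]
      simp only [hsq]
      rw [← Finset.sum_div]
      push_cast
      field_simp
    · exact ⟨_, by rw [hrn i hi, hsq]⟩
  · intro i hi
    have his : i ≠ s := by
      rintro rfl
      exact hzs hi
    rw [hrn i his, hzt]
    simp [hi]
end

section
/- Let n ≥ 1, let z ∈ ℝⁿ be a unit vector, and let L be an integer with L ≥ n. Then for every index i, |Round(z,L)[i] − z[i]| ≤ n/√L; that is, ‖Round(z,L) − z‖_∞ ≤ n/√L. Moreover, for every index i other than the chosen maximizing index i*, the sharper bound |Round(z,L)[i] − z[i]| ≤ 1/√L holds. -/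
open Finset

theorem aux_sign_sqrt (x y e : ℝ) (he : 0 ≤ e) (hy : 0 ≤ y) (h1 : y - x ^ 2 ≤ e ^ 2)
    (h2 : x ^ 2 - y ≤ e ^ 2) : |Real.sign x * Real.sqrt y - x| ≤ e := by
  have hs := Real.sqrt_nonneg y
  have hq := Real.sq_sqrt hy
  set s := Real.sqrt y
  rcases lt_trichotomy x 0 with h | h | h
  · rw [Real.sign_of_neg h, abs_le]
    constructor
    · by_contra! hc
      nlinarith
    · by_contra! hc
      nlinarith
  · subst h
    simpa using he
  · rw [Real.sign_of_pos h, abs_le]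
    constructor
    · by_contra! hc
      nlinarith
    · by_contra! hc
      nlinarith

theorem aux_floor (x : ℝ) (L : ℕ) (hL : 0 < L) :
    0 ≤ (⌊x ^ 2 * L⌋ : ℝ) / L ∧ (⌊x ^ 2 * L⌋ : ℝ) / L ≤ x ^ 2
      ∧ x ^ 2 - (⌊x ^ 2 * L⌋ : ℝ) / L ≤ 1 / L := by
  have hL' : (0 : ℝ) < L := by exact_mod_cast hL
  have h0 : (0 : ℝ) ≤ (⌊x ^ 2 * L⌋ : ℝ) := by
    exact_mod_cast Int.floor_nonneg.mpr (by positivity)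
  refine ⟨by positivity, ?_, ?_⟩
  · rw [div_le_iff₀ hL']
    exact Int.floor_le _
  · rw [sub_le_iff_le_add, ← add_div, le_div_iff₀ hL']
    linarith [Int.lt_floor_add_one (x ^ 2 * L)]

theorem aux_sq (x : ℝ) (L : ℕ) (hL : 0 < L) :
    (Real.sign x * Real.sqrt ((⌊x ^ 2 * L⌋ : ℝ) / L)) ^ 2 = (⌊x ^ 2 * L⌋ : ℝ) / L := by
  rw [mul_pow, Real.sq_sqrt (aux_floor x L hL).1]
  rcases lt_trichotomy x 0 with h | h | h
  · simp [Real.sign_of_neg h]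
  · simp [h]
  · simp [Real.sign_of_pos h]

/-- For `n ≥ 1`, a unit vector `z ∈ ℝⁿ`, and an integer `L ≥ n`: every entry of
`Round(z, L)` is within `n/√L` of the corresponding entry of `z`
(i.e. `‖Round(z,L) - z‖_∞ ≤ n/√L`), and moreover every index `i` other than the chosen
maximizing index `i*` satisfies the sharper bound `|Round(z, L) i - z i| ≤ 1/√L`. -/
theorem roundVec_entrywise_error {n : ℕ} [NeZero n] (hn : 1 ≤ n) (z : Fin n → ℝ)
    (hz1 : ∑ i, (z i) ^ 2 = 1) (L : ℕ) (hL : n ≤ L) :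
    (∀ i, |roundVec z L i - z i| ≤ (n : ℝ) / Real.sqrt L)
    ∧ (∀ i, i ≠ maxIndex z → |roundVec z L i - z i| ≤ 1 / Real.sqrt L) := by
  have hLp : 0 < L := by omega
  have hL' : (0 : ℝ) < L := by exact_mod_cast hLp
  have hn' : (1 : ℝ) ≤ n := by exact_mod_cast hn
  have hsL : (0 : ℝ) < Real.sqrt L := Real.sqrt_pos.mpr hL'
  have hsq : Real.sqrt (L : ℝ) ^ 2 = L := Real.sq_sqrt hL'.le
  have hn0 : n ≠ 0 := by omega
  have key : ∀ i, i ≠ maxIndex z → |roundVec z L i - z i| ≤ 1 / Real.sqrt L := by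
    intro i hi
    obtain ⟨a, b, c⟩ := aux_floor (z i) L hLp
    simp only [roundVec, hn0, dite_false, if_neg hi]
    have he : (1 / Real.sqrt (L : ℝ)) ^ 2 = 1 / L := by rw [div_pow, hsq, one_pow]
    apply aux_sign_sqrt _ _ _ (by positivity) a
    · rw [he]
      have : (0 : ℝ) ≤ 1 / L := by positivity
      linarith
    · rw [he]
      exact c
  refine ⟨fun i => ?_, key⟩
  by_cases hi : i = maxIndex z
  · simp only [roundVec, hn0, dite_false, if_pos hi]
    rw [← hi]
    simp only [aux_sq _ L hLp]
    have hS : 1 - ∑ j, (⌊z j ^ 2 * L⌋ : ℝ) / L = ∑ j, (z j ^ 2 - (⌊z j ^ 2 * L⌋ : ℝ) / L) := by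
      rw [Finset.sum_sub_distrib, hz1]
    rw [hS]
    have hU : ∑ j, (z j ^ 2 - (⌊z j ^ 2 * L⌋ : ℝ) / L) ≤ n / L := by
      calc _ ≤ ∑ j : Fin n, (1 : ℝ) / L :=
            Finset.sum_le_sum fun j _ => (aux_floor (z j) L hLp).2.2
        _ = n / L := by simp [div_eq_mul_inv]
    have hl : z i ^ 2 - (⌊z i ^ 2 * L⌋ : ℝ) / L ≤ ∑ j, (z j ^ 2 - (⌊z j ^ 2 * L⌋ : ℝ) / L) :=
      Finset.single_le_sum (f := fun j => z j ^ 2 - (⌊z j ^ 2 * L⌋ : ℝ) / L)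
        (fun j _ => sub_nonneg.mpr (aux_floor (z j) L hLp).2.1) (Finset.mem_univ i)
    have he : (n / Real.sqrt (L : ℝ)) ^ 2 = n ^ 2 / L := by rw [div_pow, hsq]
    have hnn : (n : ℝ) / L ≤ n ^ 2 / L := by
      gcongr
      nlinarith
    obtain ⟨a, b, c⟩ := aux_floor (z i) L hLp
    have hp : (0 : ℝ) ≤ n ^ 2 / L := by positivity
    apply aux_sign_sqrt _ _ _ (by positivity)
    · nlinarith [sq_nonneg (z i)]
    · rw [he]
      linarith
    · rw [he]
      linarith
  · refine (key i hi).trans ?_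
    gcongr
end

section
/- Let a, b ∈ ℝⁿ be nonzero vectors, let ε ∈ (0,1), and let L be an integer with L ≥ 9n⁶/ε². Define a' = ‖a‖·Round(a/‖a‖, L) and b' = ‖b‖·Round(b/‖b‖, L). Then |⟨a,b⟩ − ⟨a',b'⟩| ≤ ε · max(‖a_I‖·‖b‖, ‖a‖·‖b_I‖), where I = supp(a) ∩ supp(b). -/
open Finset

lemma maxIndex_spec {n : ℕ} [NeZero n] (z : Fin n → ℝ) (i : Fin n) : |z i| ≤ |z (maxIndex z)| :=
  (Finset.exists_max_image Finset.univ (fun i => |z i|)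
    (Finset.univ_nonempty_iff.mpr
      ⟨⟨0, Nat.pos_of_ne_zero (NeZero.ne n)⟩⟩)).choose_spec.2 i (Finset.mem_univ i)

lemma round_form {n : ℕ} (z : Fin n → ℝ) (L : ℕ) (hL : 0 < L) (hz : ∑ i, z i ^ 2 = 1)
    (i : Fin n) : ∃ s : ℝ, roundVec z L i = Real.sign (z i) * Real.sqrt s ∧ 0 ≤ s ∧
      |s - z i ^ 2| ≤ n / L ∧ s ≤ (n : ℝ) ^ 2 * z i ^ 2 := by
  have hn : n ≠ 0 := by rintro rfl; exact i.elim0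
  have : NeZero n := ⟨hn⟩
  have hn1 : (1 : ℝ) ≤ n := by exact_mod_cast Nat.one_le_iff_ne_zero.mpr hn
  have hLr : (0 : ℝ) < L := by exact_mod_cast hL
  obtain ⟨t, ht⟩ : ∃ t : Fin n → ℝ, t = fun i => (⌊(z i) ^ 2 * L⌋ : ℝ) / L := ⟨_, rfl⟩
  have t0 : ∀ j, 0 ≤ t j := by
    intro j
    rw [ht]
    have : (0 : ℤ) ≤ ⌊(z j) ^ 2 * L⌋ := Int.floor_nonneg.mpr (by positivity)
    have : (0 : ℝ) ≤ (⌊(z j) ^ 2 * L⌋ : ℝ) := by exact_mod_cast this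
    positivity
  have t1 : ∀ j, t j ≤ z j ^ 2 := by
    intro j
    rw [ht]
    simp only
    rw [div_le_iff₀ hLr]
    exact Int.floor_le _
  have t2 : ∀ j, z j ^ 2 - t j ≤ 1 / L := by
    intro j
    rw [ht]
    simp only
    have := (Int.lt_floor_add_one (z j ^ 2 * L)).le
    rw [sub_le_iff_le_add, ← add_div, le_div_iff₀ hLr]
    linarith
  have zt2 : ∀ j, (Real.sign (z j) * Real.sqrt (t j)) ^ 2 = t j := by
    intro j
    rw [mul_pow, Real.sq_sqrt (t0 j)]
    rcases lt_trichotomy (z j) 0 with h | h | h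
    · simp [Real.sign_of_neg h]
    · have h1 := t1 j
      have h0 := t0 j
      rw [h] at h1 ⊢
      simp at h1 ⊢
      linarith
    · simp [Real.sign_of_pos h]
  have hr : roundVec z L i = if i = maxIndex z then
      Real.sign (z (maxIndex z)) * Real.sqrt (t (maxIndex z) + (1 - ∑ j, t j))
      else Real.sign (z i) * Real.sqrt (t i) := by
    have e : ∀ j, (⌊(z j) ^ 2 * L⌋ : ℝ) / L = t j := fun j => by rw [ht]
    unfold roundVec
    rw [dif_neg hn]
    simp only [e, zt2]
  have h1n : (1 : ℝ) / L ≤ n / L := by gcongr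
  by_cases hi : i = maxIndex z
  · rw [if_pos hi, ← hi] at hr
    have hd : ∑ j, (z j ^ 2 - t j) = 1 - ∑ j, t j := by rw [Finset.sum_sub_distrib, hz]
    have hge : z i ^ 2 - t i ≤ ∑ j, (z j ^ 2 - t j) :=
      Finset.single_le_sum (f := fun j => z j ^ 2 - t j)
        (fun j _ => sub_nonneg.mpr (t1 j)) (Finset.mem_univ i)
    have hle : ∑ j, (z j ^ 2 - t j) ≤ n / L := by
      calc _ ≤ ∑ j : Fin n, (1 : ℝ) / L := Finset.sum_le_sum (fun j _ => t2 j)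
        _ = n / L := by simp [div_eq_mul_inv]
    have hti : t i ≤ ∑ j, t j :=
      Finset.single_le_sum (f := t) (fun j _ => t0 j) (Finset.mem_univ i)
    have hmax : 1 ≤ (n : ℝ) * z i ^ 2 := by
      calc (1 : ℝ) = ∑ j, z j ^ 2 := hz.symm
        _ ≤ ∑ j : Fin n, z i ^ 2 := Finset.sum_le_sum (fun j _ => by
            rw [sq_le_sq, hi]; exact maxIndex_spec z j)
        _ = _ := by simp
    have := t0 i
    have := t1 i
    refine ⟨_, hr, by linarith [sq_nonneg (z i)], ?_, ?_⟩
    · rw [abs_le]; constructor <;> linarith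
    · nlinarith
  · rw [if_neg hi] at hr
    refine ⟨_, hr, t0 i, ?_, ?_⟩
    · rw [abs_le]
      constructor
      · linarith [t2 i]
      · linarith [t1 i, one_div_pos.mpr hLr]
    · have := t1 i
      nlinarith [sq_nonneg (z i), mul_nonneg (sub_nonneg.mpr hn1) (sq_nonneg (z i)),
        mul_nonneg (mul_nonneg (sub_nonneg.mpr hn1) (sub_nonneg.mpr hn1)) (sq_nonneg (z i))]

lemma round_facts {n : ℕ} (z : Fin n → ℝ) (L : ℕ) (hL : 0 < L) (hz : ∑ i, z i ^ 2 = 1)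
    (i : Fin n) : (z i = 0 → roundVec z L i = 0) ∧ (z i - roundVec z L i) ^ 2 ≤ n / L ∧
      |roundVec z L i| ≤ n * |z i| := by
  obtain ⟨s, h, s0, s1, s2⟩ := round_form z L hL hz i
  rw [h]
  have key : (|z i| - √s) ^ 2 ≤ n / L := by
    refine le_trans ?_ s1
    have e : s - z i ^ 2 = (√s - |z i|) * (√s + |z i|) := by
      rw [← sq_abs (z i)]; nth_rewrite 1 [← Real.sq_sqrt s0]; ring
    have p : 0 ≤ √s + |z i| := by positivity
    rw [e, abs_mul, abs_of_nonneg p, ← sq_abs, abs_sub_comm, sq]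
    gcongr
    rw [abs_le]
    constructor <;> linarith [abs_nonneg (z i), Real.sqrt_nonneg s]
  have hs : √s ≤ n * |z i| := by
    rw [Real.sqrt_le_left (by positivity), mul_pow, sq_abs]; exact s2
  rcases lt_trichotomy (z i) 0 with h | h | h
  · rw [Real.sign_of_neg h]
    refine ⟨fun h' => absurd h' h.ne, ?_, ?_⟩
    · rw [abs_of_neg h] at key
      nlinarith
    · rw [neg_one_mul, abs_neg, abs_of_nonneg (Real.sqrt_nonneg s)]; exact hs
  · rw [h]
    refine ⟨fun _ => by simp, ?_, by simp⟩
    simp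
    positivity
  · rw [Real.sign_of_pos h]
    refine ⟨fun h' => absurd h' h.ne', ?_, ?_⟩
    · rw [abs_of_pos h] at key
      simpa using key
    · rw [one_mul, abs_of_nonneg (Real.sqrt_nonneg s)]; exact hs

lemma vnorm_pos_of_ne {n : ℕ} (a : Fin n → ℝ) (h : a ≠ 0) : 0 < vnorm a := by
  obtain ⟨i, hi⟩ := Function.ne_iff.mp h
  apply Real.sqrt_pos.mpr
  exact Finset.sum_pos' (fun j _ => sq_nonneg _) ⟨i, Finset.mem_univ i, by simpa using sq_pos_of_ne_zero hi⟩

lemma unit_sum {n : ℕ} (a : Fin n → ℝ) (h : a ≠ 0) : ∑ i, (a i / vnorm a) ^ 2 = 1 := by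
  have hp := vnorm_pos_of_ne a h
  simp only [div_pow]
  rw [← Finset.sum_div, div_eq_one_iff_eq (by positivity)]
  exact (Real.sq_sqrt (Finset.sum_nonneg fun j _ => sq_nonneg _)).symm

lemma coord_le {n : ℕ} (S : Finset (Fin n)) (a : Fin n → ℝ) (i : Fin n) (hi : i ∈ S) :
    |a i| ≤ vnormOn S a := by
  apply Real.abs_le_sqrt
  exact Finset.single_le_sum (f := fun j => a j ^ 2) (fun j _ => sq_nonneg _) hi

/-- Rounding preserves inner products: for nonzero `a, b ∈ ℝⁿ`, `ε ∈ (0,1)`, and an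
integer `L ≥ 9n⁶/ε²`, the rounded vectors `a' = ‖a‖ ⬝ Round(a/‖a‖, L)` and
`b' = ‖b‖ ⬝ Round(b/‖b‖, L)` satisfy
`|⟨a,b⟩ - ⟨a',b'⟩| ≤ ε max(‖a_I‖ ‖b‖, ‖a‖ ‖b_I‖)` where `I = supp a ∩ supp b`. -/
theorem round_inner_product_error {n : ℕ} (a b : Fin n → ℝ) (ha0 : a ≠ 0) (hb0 : b ≠ 0)
    (ε : ℝ) (hε : ε ∈ Set.Ioo (0 : ℝ) 1)
    (L : ℕ) (hL : 9 * (n : ℝ) ^ 6 / ε ^ 2 ≤ L)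
    (a' b' : Fin n → ℝ)
    (ha' : a' = fun i => vnorm a * roundVec (fun j => a j / vnorm a) L i)
    (hb' : b' = fun i => vnorm b * roundVec (fun j => b j / vnorm b) L i) :
    |(∑ k, a k * b k) - ∑ k, a' k * b' k|
      ≤ ε * max (vnormOn (supp a ∩ supp b) a * vnorm b)
          (vnorm a * vnormOn (supp a ∩ supp b) b) := by
  obtain ⟨hε0, hε1⟩ := hε
  have hA := vnorm_pos_of_ne a ha0
  have hB := vnorm_pos_of_ne b hb0
  have hn : n ≠ 0 := by
    rintro rfl
    exact ha0 (Subsingleton.elim _ _)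
  have hn1 : (1 : ℝ) ≤ n := by exact_mod_cast Nat.one_le_iff_ne_zero.mpr hn
  have hLr : (0 : ℝ) < L := lt_of_lt_of_le (by positivity) hL
  have hL0 : 0 < L := by exact_mod_cast hLr
  have hη : (n : ℝ) / L ≤ (ε / (3 * n ^ 2)) ^ 2 := by
    rw [div_le_iff₀ (by positivity)] at hL
    rw [div_pow, div_le_div_iff₀ hLr (by positivity)]
    have : (n : ℝ) ^ 5 ≤ n ^ 6 := pow_le_pow_right₀ hn1 (by norm_num)
    nlinarith
  obtain ⟨η, hηd⟩ : ∃ η : ℝ, η = ε / (3 * n ^ 2) := ⟨_, rfl⟩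
  have hη0 : 0 ≤ η := by rw [hηd]; positivity
  have hηn : η * (3 * n ^ 2) = ε := by rw [hηd]; field_simp
  rw [← hηd] at hη
  obtain ⟨x, hx⟩ : ∃ x : Fin n → ℝ, x = fun j => a j / vnorm a := ⟨_, rfl⟩
  obtain ⟨y, hy⟩ : ∃ y : Fin n → ℝ, y = fun j => b j / vnorm b := ⟨_, rfl⟩
  rw [← hx] at ha'
  rw [← hy] at hb'
  have fx := round_facts x L hL0 (by rw [hx]; exact unit_sum a ha0)
  have fy := round_facts y L hL0 (by rw [hy]; exact unit_sum b hb0)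
  have ax : ∀ i, a i = vnorm a * x i := fun i => by rw [hx]; field_simp
  have by' : ∀ i, b i = vnorm b * y i := fun i => by rw [hy]; field_simp
  obtain ⟨M, hM⟩ : ∃ M : ℝ, M = max (vnormOn (supp a ∩ supp b) a * vnorm b)
          (vnorm a * vnormOn (supp a ∩ supp b) b) := ⟨_, rfl⟩
  rw [← hM]
  have hM0 : 0 ≤ M := by
    rw [hM]
    exact le_max_of_le_left (mul_nonneg (Real.sqrt_nonneg _) hB.le)
  have term : ∀ k, |a k * b k - a' k * b' k| ≤ (1 + n) * (η * M) := by
    intro k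
    by_cases hk : k ∈ supp a ∩ supp b
    · have h1 : vnorm a * |x k| * vnorm b ≤ M := by
        have h := coord_le _ a k hk
        rw [ax k, abs_mul, abs_of_pos hA] at h
        rw [hM]
        exact le_max_of_le_left (mul_le_mul_of_nonneg_right h hB.le)
      have h2 : vnorm a * (vnorm b * |y k|) ≤ M := by
        have h := coord_le _ b k hk
        rw [by' k, abs_mul, abs_of_pos hB] at h
        rw [hM]
        exact le_max_of_le_right (mul_le_mul_of_nonneg_left h hA.le)
      obtain ⟨-, ex, -⟩ := fx k
      obtain ⟨-, ey, gy⟩ := fy k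
      have ex' := abs_le_of_sq_le_sq (ex.trans hη) hη0
      have ey' := abs_le_of_sq_le_sq (ey.trans hη) hη0
      have ex2 : |x k - roundVec x L k| ≤ η := ex'
      have ey2 : |y k - roundVec y L k| ≤ η := ey'
      rw [ha', hb', ax k, by' k]
      have e : vnorm a * x k * (vnorm b * y k) -
          vnorm a * roundVec x L k * (vnorm b * roundVec y L k) =
          vnorm a * vnorm b * (x k * (y k - roundVec y L k) +
            roundVec y L k * (x k - roundVec x L k)) := by ring
      simp only
      rw [e, abs_mul, abs_of_pos (mul_pos hA hB)]
      calc _ ≤ vnorm a * vnorm b * (|x k| * η + n * |y k| * η) := by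
            gcongr
            refine (abs_add_le _ _).trans ?_
            rw [abs_mul, abs_mul]
            gcongr
        _ = (vnorm a * |x k| * vnorm b) * η + n * (vnorm a * (vnorm b * |y k|)) * η := by ring
        _ ≤ M * η + n * M * η := by gcongr
        _ = _ := by ring
    · have hz : a k = 0 ∨ b k = 0 := by
        by_contra! h
        exact hk (by simp [supp, h.1, h.2])
      have : a k * b k - a' k * b' k = 0 := by
        rcases hz with h | h
        · have : x k = 0 := by rw [hx]; simp [h]
          rw [ha']; simp [h, (fx k).1 this]
        · have : y k = 0 := by rw [hy]; simp [h]
          rw [hb']; simp [h, (fy k).1 this]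
      rw [this, abs_zero]
      positivity
  rw [← Finset.sum_sub_distrib]
  calc _ ≤ ∑ k, |a k * b k - a' k * b' k| := Finset.abs_sum_le_sum_abs _ _
    _ ≤ ∑ k : Fin n, (1 + n) * (η * M) := Finset.sum_le_sum fun k _ => term k
    _ = (n * (1 + n)) * (η * M) := by simp; ring
    _ ≤ (3 * n ^ 2) * (η * M) := by
        refine mul_le_mul_of_nonneg_right ?_ (by positivity)
        nlinarith
    _ = ε * M := by rw [← hηn]; ring
end

section
/- There is an absolute constant C > 0 such that the following holds. Let ε ∈ (0,1), let a, b ∈ ℝⁿ be nonzero vectors, let L be an integer with L ≥ 9n⁶/ε², and let m ≥ C/ε² be an integer. Set u = Round(a/‖a‖, L) and v = Round(b/‖b‖, L), with expanded supports Ū and V̄ in {1,...,n}×{1,...,L}, and let h¹,...,hᵐ be mutually independent uniform hash families on {1,...,n}×{1,...,L}. For each i, let ℓ_U^i and ℓ_V^i be the (almost surely unique) minimizers of hⁱ over Ū and over V̄, with block indices j_U^i and j_V^i; define Z_i = 1[hⁱ(ℓ_U^i) = hⁱ(ℓ_V^i)] · u[j_U^i]·v[j_V^i] / min(u[j_U^i]²,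 v[j_V^i]²), define M̃ = (1/L)·(m / ∑_{i=1}^{m} min(hⁱ(ℓ_U^i), hⁱ(ℓ_V^i)) − 1), and define the estimate F = ‖a‖·‖b‖·(M̃/m)·∑_{i=1}^{m} Z_i. Then with probability at least 2/3, |F − ⟨a,b⟩| ≤ ε · max(‖a_I‖·‖b‖, ‖a‖·‖b_I‖), where I = supp(a) ∩ supp(b). -/
open MeasureTheory Finset
open scoped ENNReal

namespace WMH

instance instProbUnif : IsProbabilityMeasure ((volume : Measure ℝ).restrict (Set.Icc 0 1)) :=
  ⟨by simp⟩

instance instProbHash (J : Type*) [Fintype J] : IsProbabilityMeasure (uniformHash J) := by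
  unfold uniformHash; infer_instance

instance instProbHashes (m : ℕ) (J : Type*) [Fintype J] :
    IsProbabilityMeasure (hashFamilies m J) := by
  unfold hashFamilies; infer_instance

lemma null_eq {J : Type*} [Fintype J] {p q : J} (hpq : p ≠ q) :
    uniformHash J {h | h p = h q} = 0 := by
  classical
  have h1 : uniformHash J = (volume : Measure (J → ℝ)).restrict
      (Set.univ.pi fun _ => Set.Icc 0 1) := by
    unfold uniformHash
    rw [volume_pi, Measure.restrict_pi_pi]
  have h2 : (volume : Measure (J → ℝ)) {h | h p = h q} = 0 := by
    let S : Submodule ℝ (J → ℝ) := LinearMap.ker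
      ((LinearMap.proj p : (J → ℝ) →ₗ[ℝ] ℝ) - LinearMap.proj q)
    have hS : ({h | h p = h q} : Set (J → ℝ)) = S := by
      ext h
      simp [S, sub_eq_zero]
    rw [hS]
    apply Measure.addHaar_submodule
    intro htop
    have : (Pi.single p 1 : J → ℝ) ∈ S := by rw [htop]; trivial
    simp [S, hpq.symm] at this
  rw [h1]
  exact le_antisymm ((Measure.restrict_apply_le _ _).trans h2.le) (zero_le)

lemma ae_inj (J : Type*) [Fintype J] : ∀ᵐ h ∂(uniformHash J), Function.Injective h := by
  have : ∀ p q : J, ∀ᵐ h ∂(uniformHash J), h p = h q → p = q := by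
    intro p q
    by_cases hpq : p = q
    · exact Filter.Eventually.of_forall fun _ _ => hpq
    · have := null_eq hpq
      rw [ae_iff]
      refine measure_mono_null ?_ this
      intro h hh
      simp at hh
      exact hh.1
  have h2 := ae_all_iff.2 fun p => ae_all_iff.2 (this p)
  filter_upwards [h2] with h hh p q
  exact hh p q

def minEv {J : Type*} (W : Finset J) (p : J) : Set (J → ℝ) := {h | ∀ q ∈ W, h p ≤ h q}

lemma measurableSet_minEv {J : Type*} [Fintype J] (W : Finset J) (p : J) :
    MeasurableSet (minEv W p) := by
  have : minEv W p = ⋂ q ∈ W, {h | h p ≤ h q} := by ext; simp [minEv]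
  rw [this]
  refine Finset.measurableSet_biInter _ fun q _ => ?_
  exact measurableSet_le (measurable_pi_apply _) (measurable_pi_apply _)

lemma minEv_symm {J : Type*} [Fintype J] (W : Finset J) {p q : J} (hp : p ∈ W) (hq : q ∈ W) :
    uniformHash J (minEv W p) = uniformHash J (minEv W q) := by
  classical
  have hmp := measurePreserving_arrowCongr'
    (fun _ : J => (volume : Measure ℝ).restrict (Set.Icc 0 1))
    (fun _ : J => (volume : Measure ℝ).restrict (Set.Icc 0 1)) (Equiv.swap p q)
    (MeasurableEquiv.refl ℝ) (fun i => MeasurePreserving.id _)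
  have := hmp.measure_preimage (measurableSet_minEv W p).nullMeasurableSet
  unfold uniformHash
  rw [← this]
  congr 1
  ext h
  change (∀ r ∈ W, h ((Equiv.swap p q).symm p) ≤ h ((Equiv.swap p q).symm r)) ↔
    ∀ r ∈ W, h q ≤ h r
  simp only [Equiv.symm_swap, Equiv.swap_apply_left]
  have hsw : ∀ r ∈ W, Equiv.swap p q r ∈ W := by
    intro r hr
    rw [Equiv.swap_apply_def]; split_ifs <;> assumption
  constructor
  · intro H r hr
    have := H _ (hsw r hr)
    simpa using this
  · intro H r hr
    exact H _ (hsw r hr)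

lemma minEv_prob {J : Type*} [Fintype J] (W : Finset J) {p : J} (hp : p ∈ W) :
    (uniformHash J).real (minEv W p) = 1 / (#W : ℝ) := by
  classical
  have hU : (⋃ q ∈ W, minEv W q) = Set.univ := by
    ext h
    obtain ⟨x, hx, hx'⟩ := W.exists_min_image h ⟨p, hp⟩
    simp only [Set.mem_iUnion, Set.mem_univ, iff_true]
    exact ⟨x, hx, hx'⟩
  have h1 := measure_biUnion_finset₀ (μ := uniformHash J) (s := W) (f := minEv W) (by
      intro a ha b hb hab
      refine measure_mono_null ?_ (null_eq hab)
      rintro h ⟨h1, h2⟩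
      exact le_antisymm (h1 b hb) (h2 a ha)) (fun b _ => (measurableSet_minEv W b).nullMeasurableSet)
  rw [hU, measure_univ, Finset.sum_congr rfl (fun q hq => minEv_symm W hq hp)] at h1
  simp at h1
  have h2 := congrArg ENNReal.toReal h1
  simp at h2
  rw [Measure.real, eq_div_iff]
  · linarith
  · have := Finset.card_pos.2 ⟨p, hp⟩
    positivity

lemma minTail {J : Type*} [Fintype J] (W : Finset J) (hW : W.Nonempty) {t : ℝ} (ht : 0 < t)  :
    uniformHash J {h | t < W.inf' hW h} = ENNReal.ofReal (1 - t) ^ #W := by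
  classical
  have : {h : J → ℝ | t < W.inf' hW h} =
      Set.univ.pi (fun j => if j ∈ W then Set.Ioi t else Set.univ) := by
    ext h
    simp only [Set.mem_ofPred_eq, Finset.lt_inf'_iff, Set.mem_univ_pi]
    refine forall_congr' fun j => ?_
    by_cases hj : j ∈ W <;> simp [hj]
  rw [this, uniformHash, Measure.pi_pi]
  have h2 : ∀ j, (volume.restrict (Set.Icc (0:ℝ) 1)) (if j ∈ W then Set.Ioi t else Set.univ)
      = if j ∈ W then ENNReal.ofReal (1 - t) else 1 := by
    intro j
    split_ifs
    · rw [Measure.restrict_apply measurableSet_Ioi]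
      have : Set.Ioi t ∩ Set.Icc 0 1 = Set.Ioc t 1 := by
        ext x
        constructor
        · rintro ⟨a, b, c⟩; exact ⟨a, c⟩
        · rintro ⟨a, c⟩; exact ⟨a, ht.le.trans a.le, c⟩
      rw [this, Real.volume_Ioc]
    · simp
  simp_rw [h2]
  rw [Finset.prod_ite]
  simp

lemma measurable_min {J : Type*} [Fintype J] (W : Finset J) (hW : W.Nonempty) :
    Measurable (fun h : J → ℝ => W.inf' hW h) := by
  refine measurable_of_Ioi fun t => ?_
  have : (fun h : J → ℝ => W.inf' hW h) ⁻¹' Set.Ioi t = ⋂ q ∈ W, {h | t < h q} := by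
    ext h
    simp [Finset.lt_inf'_iff]
  rw [this]
  refine Finset.measurableSet_biInter _ fun q _ => ?_
  exact measurableSet_lt measurable_const (measurable_pi_apply _)

lemma ae_range (J : Type*) [Fintype J] :
    ∀ᵐ h ∂(uniformHash J), ∀ j, h j ∈ Set.Icc (0:ℝ) 1 := by
  refine ae_all_iff.2 fun j => ?_
  have := (measurePreserving_eval (fun _ : J => (volume : Measure ℝ).restrict (Set.Icc 0 1)) j)
  have h2 : ∀ᵐ x ∂((volume : Measure ℝ).restrict (Set.Icc 0 1)), x ∈ Set.Icc (0:ℝ) 1 :=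
    ae_restrict_mem measurableSet_Icc
  exact this.quasiMeasurePreserving.ae h2

lemma ae_min_range {J : Type*} [Fintype J] (W : Finset J) (hW : W.Nonempty) :
    ∀ᵐ h ∂(uniformHash J), W.inf' hW h ∈ Set.Icc (0:ℝ) 1 := by
  filter_upwards [ae_range J] with h hh
  obtain ⟨p, hp⟩ := hW
  exact ⟨Finset.le_inf' _ _ fun b _ => (hh b).1, (Finset.inf'_le _ hp).trans (hh p).2⟩

lemma min_layer {J : Type*} [Fintype J] (W : Finset J) (hW : W.Nonempty) (g : ℝ → ℝ)
    (hg : Continuous g) (hg0 : ∀ t, 0 < t → 0 ≤ g t) :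
    ∫ h, (∫ t in (0:ℝ)..(W.inf' hW h), g t) ∂(uniformHash J) =
      ∫ t in (0:ℝ)..1, (1 - t) ^ #W * g t := by
  have hnn : 0 ≤ᵐ[uniformHash J] fun h => W.inf' hW h := by
    filter_upwards [ae_min_range W hW] with h hh using hh.1
  have h1 := lintegral_comp_eq_lintegral_meas_lt_mul (uniformHash J) hnn
    (measurable_min W hW).aemeasurable (g := g) (fun t _ => hg.intervalIntegrable _ _)
    ((ae_restrict_mem measurableSet_Ioi).mono fun t ht => hg0 t ht)
  have hmeas : Measurable fun x : ℝ => ∫ t in (0:ℝ)..x, g t :=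
    (intervalIntegral.continuous_primitive (fun a b => hg.intervalIntegrable a b) 0).measurable
  rw [integral_eq_lintegral_of_nonneg_ae]
  rotate_left
  · filter_upwards [hnn] with h hh
    refine intervalIntegral.integral_nonneg_of_ae_restrict hh ?_
    rw [← Measure.restrict_congr_set Ioc_ae_eq_Icc]
    exact (ae_restrict_mem measurableSet_Ioc).mono fun t ht => hg0 t ht.1
  · exact (hmeas.comp (measurable_min W hW)).aestronglyMeasurable
  rw [h1, intervalIntegral.integral_of_le zero_le_one, integral_eq_lintegral_of_nonneg_ae]
  rotate_left
  · exact (ae_restrict_mem measurableSet_Ioc).mono fun t ht =>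
      mul_nonneg (pow_nonneg (by linarith [ht.2]) _) (hg0 t ht.1)
  · exact (by fun_prop : Continuous fun t : ℝ => (1 - t) ^ #W * g t).aestronglyMeasurable
  congr 1
  have hne : #W ≠ 0 := (Finset.card_pos.2 hW).ne'
  have hsplit : Set.Ioi (0:ℝ) = Set.Ioc 0 1 ∪ Set.Ioi 1 := (Set.Ioc_union_Ioi_eq_Ioi zero_le_one).symm
  rw [hsplit, lintegral_union measurableSet_Ioi (Set.Ioc_disjoint_Ioi le_rfl)]
  have hz : ∫⁻ t in Set.Ioi (1:ℝ), uniformHash J {a | t < W.inf' hW a} * ENNReal.ofReal (g t) = 0 := by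
    rw [setLIntegral_congr_fun (g := fun _ => 0) measurableSet_Ioi]
    · simp
    · intro t ht
      have ht' : (1:ℝ) < t := ht
      simp only
      rw [minTail W hW (by linarith), ENNReal.ofReal_of_nonpos (by linarith)]
      simp [hne]
  rw [hz, add_zero]
  refine setLIntegral_congr_fun measurableSet_Ioc ?_
  intro t ht
  simp only
  rw [minTail W hW ht.1, ENNReal.ofReal_mul (pow_nonneg (by linarith [ht.2]) _),
    ENNReal.ofReal_pow (by linarith [ht.2])]

lemma int_pow (N : ℕ) : ∫ t in (0:ℝ)..1, (1 - t) ^ N = 1 / (N + 1) := by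
  rw [intervalIntegral.integral_comp_sub_left (fun x => x ^ N) 1]
  simp

lemma min_mean {J : Type*} [Fintype J] (W : Finset J) (hW : W.Nonempty) :
    ∫ h, W.inf' hW h ∂(uniformHash J) = 1 / ((#W : ℝ) + 1) := by
  have := min_layer W hW (fun _ => 1) continuous_const (fun _ _ => zero_le_one)
  simpa [int_pow] using this

lemma min_sq {J : Type*} [Fintype J] (W : Finset J) (hW : W.Nonempty) :
    ∫ h, (W.inf' hW h) ^ 2 ∂(uniformHash J) = 2 / (((#W : ℝ) + 1) * (#W + 2)) := by
  have := min_layer W hW (fun t => 2 * t) (by fun_prop) (fun _ _ => by positivity)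
  have h1 : ∀ x : ℝ, ∫ t in (0:ℝ)..x, 2 * t = x ^ 2 := by
    intro x
    rw [intervalIntegral.integral_const_mul, integral_id]; ring
  simp_rw [h1] at this
  rw [this]
  have h2 : (fun t : ℝ => (1 - t) ^ #W * (2 * t)) =
      fun t => 2 * (1 - t) ^ #W - 2 * (1 - t) ^ (#W + 1) := by
    ext t; ring
  rw [h2, intervalIntegral.integral_sub, intervalIntegral.integral_const_mul,
    intervalIntegral.integral_const_mul, int_pow, int_pow]
  · push_cast
    field_simp
    ring
  · exact (by fun_prop : Continuous fun t : ℝ => 2 * (1 - t) ^ #W).intervalIntegrable _ _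
  · exact (by fun_prop : Continuous fun t : ℝ => 2 * (1 - t) ^ (#W + 1)).intervalIntegrable _ _

lemma cheb {Ω : Type*} [MeasurableSpace Ω] (μ : Measure Ω) [IsProbabilityMeasure μ]
    (m : ℕ) (hm : 0 < m) (f : Ω → ℝ) (hf : MemLp f 2 μ) (K s η : ℝ) (hs : 0 ≤ s) (hη : 0 < η)
    (hvar : ∫ x, f x ^ 2 ∂μ ≤ K * s ^ 2) :
    (Measure.pi fun _ : Fin m => μ) {H | η * s < |(∑ i, f (H i)) / m - ∫ x, f x ∂μ|}
      ≤ ENNReal.ofReal (K / (m * η ^ 2)) := by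
  have hm' : (0:ℝ) < m := by exact_mod_cast hm
  have hmem : ∀ i : Fin m, MemLp (fun H : Fin m → Ω => f (H i)) 2 (Measure.pi fun _ => μ) :=
    fun i => hf.comp_measurePreserving (measurePreserving_eval (fun _ : Fin m => μ) i)
  rcases hs.eq_or_lt with h0 | hs
  · have hz : ∫ x, f x ^ 2 ∂μ = 0 := by
      refine le_antisymm (by simpa [← h0] using hvar) (integral_nonneg fun x => sq_nonneg _)
    rw [integral_eq_zero_iff_of_nonneg (fun x => sq_nonneg _) hf.integrable_sq] at hz
    have hz' : f =ᵐ[μ] 0 := by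
      filter_upwards [hz] with x hx
      simpa using hx
    have hint : ∫ x, f x ∂μ = 0 := by rw [integral_congr_ae hz']; simp
    have : ∀ᵐ H ∂(Measure.pi fun _ : Fin m => μ), ∀ i, f (H i) = 0 :=
      ae_all_iff.2 fun i =>
        (measurePreserving_eval (fun _ : Fin m => μ) i).quasiMeasurePreserving.ae hz'
    have h3 : (Measure.pi fun _ : Fin m => μ)
        {H | η * s < |(∑ i, f (H i)) / m - ∫ x, f x ∂μ|} = 0 := by
      refine measure_mono_null ?_ (ae_iff.1 this)
      intro H hH hall
      simp [hint, hall, ← h0] at hH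
    rw [h3]; exact zero_le
  · set X : (Fin m → Ω) → ℝ := ∑ i, fun H => f (H i) with hX
    have hXm : MemLp X 2 (Measure.pi fun _ => μ) := memLp_finsetSum' _ fun i _ => hmem i
    have hE : ∫ H, X H ∂(Measure.pi fun _ : Fin m => μ) = m * ∫ x, f x ∂μ := by
      simp only [hX, Finset.sum_apply]
      rw [integral_finsetSum _ fun i _ => (hmem i).integrable (by norm_num)]
      simp_rw [integral_comp_eval (μ := fun _ : Fin m => μ) hf.aestronglyMeasurable]
      simp
    have hV : ProbabilityTheory.variance X (Measure.pi fun _ => μ) ≤ m * (K * s ^ 2) := by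
      rw [hX, ProbabilityTheory.variance_sum_pi (X := fun _ => f) (fun _ => hf)]
      simp only [Finset.sum_const, Finset.card_univ, Fintype.card_fin, nsmul_eq_mul]
      refine mul_le_mul_of_nonneg_left ?_ hm'.le
      refine le_trans (ProbabilityTheory.variance_le_expectation_sq hf.aestronglyMeasurable) ?_
      simpa using hvar
    have hc : 0 < m * (η * s) := by positivity
    refine (measure_mono ?_).trans
      ((ProbabilityTheory.meas_ge_le_variance_div_sq hXm hc).trans (ENNReal.ofReal_le_ofReal ?_))
    · intro H hH
      simp only [Set.mem_ofPred_eq] at hH ⊢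
      rw [hE]
      have : X H - m * ∫ x, f x ∂μ = m * ((∑ i, f (H i)) / m - ∫ x, f x ∂μ) := by
        simp only [hX, Finset.sum_apply]
        field_simp
      rw [this, abs_mul, abs_of_pos hm']
      exact mul_le_mul_of_nonneg_left hH.le hm'.le
    · rw [div_le_div_iff₀ (by positivity) (by positivity)]
      calc _ ≤ m * (K * s ^ 2) * (m * η ^ 2) := by gcongr
        _ = _ := by ring

end WMH

namespace WMH

lemma round_facts {n : ℕ} (z : Fin n → ℝ) (hz : ∑ i, z i ^ 2 = 1) (L : ℕ)
    (hL : (n : ℝ) ^ 2 ≤ L) :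
    (∀ i, ∃ k : ℕ, roundVec z L i ^ 2 * L = k) ∧ (∑ i, roundVec z L i ^ 2 = 1) ∧
    (∀ i, roundVec z L i ^ 2 ≤ 2 * z i ^ 2) ∧
    ∑ i, (roundVec z L i - z i) ^ 2 ≤ 2 * ((n : ℝ) - 1) / L := by
  have hn : n ≠ 0 := by
    rintro rfl
    simp at hz
  have : NeZero n := ⟨hn⟩
  have hn1 : (1 : ℝ) ≤ n := by exact_mod_cast Nat.pos_of_ne_zero hn
  have hLpos : (0 : ℝ) < L := by nlinarith
  set s : Fin n := maxIndex z with hs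
  have hsmax : ∀ i, |z i| ≤ |z s| := fun i =>
    (Finset.exists_max_image Finset.univ (fun i => |z i|)
      (Finset.univ_nonempty_iff.mpr ⟨⟨0, Nat.pos_of_ne_zero (NeZero.ne n)⟩⟩)).choose_spec.2 i
        (Finset.mem_univ i)
  have hsbig : 1 ≤ n * z s ^ 2 := by
    rw [← hz]
    calc ∑ i, z i ^ 2 ≤ ∑ _i : Fin n, z s ^ 2 :=
          Finset.sum_le_sum fun i _ => sq_le_sq.2 (hsmax i)
      _ = _ := by simp
  have hzs : z s ≠ 0 := by
    intro h; rw [h] at hsbig; norm_num at hsbig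
  have hsgn : ∀ x : ℝ, x ≠ 0 → Real.sign x ^ 2 = 1 := by
    intro x hx
    rcases Real.sign_apply_eq_of_ne_zero x hx with h | h <;> rw [h] <;> norm_num
  set k : Fin n → ℤ := fun i => ⌊z i ^ 2 * L⌋ with hk
  have hk0 : ∀ i, (0:ℝ) ≤ k i := fun i => by
    exact_mod_cast Int.floor_nonneg.2 (by positivity)
  have hkle : ∀ i, (k i : ℝ) / L ≤ z i ^ 2 := fun i => by
    rw [div_le_iff₀ hLpos]; exact Int.floor_le _
  have hklt : ∀ i, z i ^ 2 - (k i : ℝ) / L ≤ 1 / L := fun i => by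
    have := (Int.lt_floor_add_one (z i ^ 2 * L)).le
    have h2 : z i ^ 2 ≤ ((k i : ℝ) + 1) / L := by
      rw [le_div_iff₀ hLpos]; exact this
    rw [add_div] at h2; linarith
  set zt : Fin n → ℝ := fun i => Real.sign (z i) * Real.sqrt ((⌊(z i) ^ 2 * L⌋ : ℝ) / L) with hzt
  have hztsq : ∀ i, zt i ^ 2 = k i / L := by
    intro i
    simp only [hzt]
    rw [mul_pow, Real.sq_sqrt (div_nonneg (hk0 i) hLpos.le)]
    by_cases h : z i = 0
    · simp [h, hk]
    · rw [hsgn _ h, one_mul]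
  set D : ℝ := ∑ j ∈ Finset.univ.erase s, (z j ^ 2 - k j / L) with hD
  have hD0 : 0 ≤ D := Finset.sum_nonneg fun j _ => sub_nonneg.2 (hkle j)
  have hD1 : D ≤ ((n : ℝ) - 1) / L := by
    calc D ≤ ∑ j ∈ Finset.univ.erase s, (1 / (L : ℝ)) := Finset.sum_le_sum fun j _ => hklt j
      _ = _ := by
        rw [Finset.sum_const, Finset.card_erase_of_mem (Finset.mem_univ _)]
        simp [Nat.cast_sub (Nat.pos_of_ne_zero hn : 1 ≤ n)]
        ring
  have hsum : zt s ^ 2 + (1 - ∑ j, zt j ^ 2) = z s ^ 2 + D := by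
    simp_rw [hztsq]
    rw [← hz, ← Finset.add_sum_erase _ _ (Finset.mem_univ s),
      ← Finset.add_sum_erase (a := s) _ (fun i => (k i : ℝ) / L) (Finset.mem_univ s), hD,
      Finset.sum_sub_distrib]
    ring
  have hu : ∀ i, roundVec z L i = if i = s then
      Real.sign (z s) * Real.sqrt (zt s ^ 2 + (1 - ∑ j, zt j ^ 2)) else zt i := by
    intro i
    unfold roundVec
    rw [dif_neg hn]
  have hus : roundVec z L s = Real.sign (z s) * Real.sqrt (z s ^ 2 + D) := by
    rw [hu, if_pos rfl, hsum]
  have hun : ∀ i, i ≠ s → roundVec z L i = zt i := fun i hi => by rw [hu, if_neg hi]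
  have hussq : roundVec z L s ^ 2 = z s ^ 2 + D := by
    rw [hus, mul_pow, hsgn _ hzs, Real.sq_sqrt (by positivity), one_mul]
  have hunsq : ∀ i, i ≠ s → roundVec z L i ^ 2 = k i / L := fun i hi => by
    rw [hun i hi, hztsq]
  have hprod : ∀ i, 0 ≤ roundVec z L i * z i := by
    intro i
    have hsz : ∀ x : ℝ, 0 ≤ Real.sign x * x := by
      intro x
      exact Real.sign_mul_nonneg x
    by_cases hi : i = s
    · rw [hi, hus]
      have := mul_nonneg (hsz (z s)) (Real.sqrt_nonneg (z s ^ 2 + D))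
      linarith
    · rw [hun i hi]
      have := mul_nonneg (hsz (z i)) (Real.sqrt_nonneg ((⌊(z i) ^ 2 * L⌋ : ℝ) / L))
      simp only [hzt]
      linarith
  have hdiff : ∀ i, (roundVec z L i - z i) ^ 2 ≤ |roundVec z L i ^ 2 - z i ^ 2| := by
    intro i
    have h := hprod i
    have h1 : |roundVec z L i - z i| ≤ |roundVec z L i + z i| := by
      rw [← sq_le_sq]; nlinarith
    rw [sq_sub_sq, abs_mul, ← sq_abs, sq]
    exact mul_le_mul_of_nonneg_right h1 (abs_nonneg _)
  refine ⟨?_, ?_, ?_, ?_⟩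
  · intro i
    have hint : ∃ q : ℤ, roundVec z L i ^ 2 * L = q := by
      by_cases hi : i = s
      · refine ⟨k s + (L - ∑ j, k j), ?_⟩
        rw [hi, hussq, ← hsum]
        simp_rw [hztsq]
        rw [← Finset.sum_div]
        push_cast
        field_simp
      · refine ⟨k i, ?_⟩
        rw [hunsq i hi]
        field_simp
    obtain ⟨q, hq⟩ := hint
    have hq0 : 0 ≤ q := by
      have : (0:ℝ) ≤ q := by rw [← hq]; positivity
      exact_mod_cast this
    refine ⟨q.toNat, ?_⟩
    rw [hq]
    have := Int.toNat_of_nonneg hq0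
    exact_mod_cast this.symm
  · rw [← Finset.add_sum_erase _ _ (Finset.mem_univ s), hussq,
      Finset.sum_congr rfl (fun i hi => hunsq i (Finset.ne_of_mem_erase hi)), hD,
      Finset.sum_sub_distrib, ← hz, ← Finset.add_sum_erase _ _ (Finset.mem_univ s)]
    ring
  · intro i
    by_cases hi : i = s
    · rw [hi, hussq]
      have h1 : D ≤ 1 / n := by
        refine hD1.trans ?_
        rw [div_le_div_iff₀ hLpos (by linarith)]
        nlinarith
      have h2 : 1 / (n : ℝ) ≤ z s ^ 2 := by
        rw [div_le_iff₀ (by linarith)]; linarith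
      linarith
    · rw [hunsq i hi]
      have := hkle i
      nlinarith [sq_nonneg (z i)]
  · calc ∑ i, (roundVec z L i - z i) ^ 2 ≤ ∑ i, |roundVec z L i ^ 2 - z i ^ 2| :=
          Finset.sum_le_sum fun i _ => hdiff i
      _ = D + D := by
          rw [← Finset.add_sum_erase _ _ (Finset.mem_univ s), hussq]
          congr 1
          · rw [add_sub_cancel_left, abs_of_nonneg hD0]
          · refine Finset.sum_congr rfl fun i hi => ?_
            rw [hunsq i (Finset.ne_of_mem_erase hi), abs_sub_comm, abs_of_nonneg]
            exact sub_nonneg.2 (hkle i)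
      _ ≤ _ := by
        rw [mul_div_assoc]; linarith

lemma rfac (n : ℕ) (hn : 1 ≤ n) (L ε : ℝ) (hε : 0 < ε) (hL : 9 * (n : ℝ) ^ 6 / ε ^ 2 ≤ L) :
    2 * ((n : ℝ) - 1) / L ≤ ε ^ 2 / 18 := by
  have hn1 : (1 : ℝ) ≤ n := by exact_mod_cast hn
  have h1 : 9 * (n : ℝ) ^ 6 ≤ L * ε ^ 2 := by rwa [div_le_iff₀ (by positivity)] at hL
  have hLpos : 0 < L := lt_of_lt_of_le (by positivity) hL
  rw [div_le_div_iff₀ hLpos (by norm_num)]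
  have h2 : (n : ℝ) ^ 2 ≤ n ^ 6 := pow_le_pow_right₀ hn1 (by norm_num)
  nlinarith [sq_nonneg ((n : ℝ) - 2)]

lemma rfac2 (n : ℕ) (hn : 1 ≤ n) (L ε : ℝ) (hε : 0 < ε) (hε1 : ε < 1)
    (hL : 9 * (n : ℝ) ^ 6 / ε ^ 2 ≤ L) : (n : ℝ) ^ 2 ≤ L := by
  have hn1 : (1 : ℝ) ≤ n := by exact_mod_cast hn
  refine le_trans ?_ hL
  rw [le_div_iff₀ (by positivity)]
  have h2 : (n : ℝ) ^ 2 ≤ n ^ 6 := pow_le_pow_right₀ hn1 (by norm_num)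
  have h3 : ε ^ 2 ≤ 1 := by nlinarith
  nlinarith [sq_nonneg (n : ℝ)]

/-- Deterministic combination. -/
lemma final_ineq (N g X μ ρ ε T : ℝ) (hN : 1 ≤ N) (hε : 0 < ε) (hε1 : ε < 1) (hT : 0 ≤ T)
    (hg : |g - 1| ≤ ε / 20) (hX : |X - μ| ≤ ε / 20 * T) (hμ : |μ| ≤ 2 * T)
    (hρ : |μ - ρ| ≤ 3 / 5 * ε * T) :
    |((N + 1) / g - 1) / N * X - ρ| ≤ ε * T := by
  have hg' := abs_le.1 hg
  have hgpos : 19 / 20 ≤ g := by linarith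
  have hr : |((N + 1) / g - 1) / N - 1| ≤ ε / 9 := by
    have : ((N + 1) / g - 1) / N - 1 = (1 + 1 / N) * (-(g - 1) / g) := by
      field_simp; ring
    rw [this, abs_mul, abs_div, abs_neg, abs_of_pos (by positivity : 0 < 1 + 1 / N),
      abs_of_pos (by linarith : 0 < g)]
    have h1 : 1 / N ≤ 1 := by rw [div_le_one (by linarith)]; exact hN
    have h2 : |g - 1| / g ≤ ε / 19 := by
      rw [div_le_iff₀ (by linarith)]; nlinarith
    calc _ ≤ 2 * (ε / 19) := by gcongr; linarith
      _ ≤ _ := by linarith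
  set r := ((N + 1) / g - 1) / N
  have hdec : r * X - ρ = (r - 1) * (X - μ) + (X - μ) + (r - 1) * μ + (μ - ρ) := by ring
  rw [hdec]
  have e1 : |(r - 1) * (X - μ)| ≤ ε / 9 * (ε / 20 * T) := by
    rw [abs_mul]; gcongr
  have e2 : |(r - 1) * μ| ≤ ε / 9 * (2 * T) := by
    rw [abs_mul]; gcongr
  have e3 := abs_add_le ((r - 1) * (X - μ) + (X - μ) + (r - 1) * μ) (μ - ρ)
  have e4 := abs_add_le ((r - 1) * (X - μ) + (X - μ)) ((r - 1) * μ)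
  have e5 := abs_add_le ((r - 1) * (X - μ)) (X - μ)
  have e6 : 0 ≤ ε * T := by positivity
  have e7 : ε * (ε * T) ≤ ε * T := by nlinarith
  nlinarith

lemma cs {ι : Type*} (I : Finset ι) (x y : ι → ℝ) (P Q R : ℝ) (hR : 0 ≤ R)
    (hP : ∑ i ∈ I, x i ^ 2 ≤ P) (hQ : ∑ i ∈ I, y i ^ 2 ≤ Q) (h : P * Q ≤ R ^ 2) :
    |∑ i ∈ I, x i * y i| ≤ R := by
  apply abs_le_of_sq_le_sq _ hR
  have h0 : 0 ≤ ∑ i ∈ I, x i ^ 2 := Finset.sum_nonneg fun i _ => sq_nonneg _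
  have h1 : 0 ≤ ∑ i ∈ I, y i ^ 2 := Finset.sum_nonneg fun i _ => sq_nonneg _
  have := Finset.sum_mul_sq_le_sq_mul_sq I x y
  have := mul_le_mul hP hQ h1 (h0.trans hP)
  linarith

/-- Inner-product facts after rounding. -/
lemma inner_facts {n : ℕ} (z w u v : Fin n → ℝ) (I : Finset (Fin n)) (ε T : ℝ)
    (hε : 0 < ε) (hT : 0 ≤ T)
    (hI : ∀ i, i ∉ I → z i = 0 ∨ w i = 0)
    (hz : ∑ i ∈ I, z i ^ 2 ≤ T ^ 2) (hw : ∑ i ∈ I, w i ^ 2 ≤ T ^ 2)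
    (hv1 : ∑ i, v i ^ 2 = 1)
    (huz : ∀ i, u i ^ 2 ≤ 2 * z i ^ 2) (hvw : ∀ i, v i ^ 2 ≤ 2 * w i ^ 2)
    (hu2 : ∑ i, (u i - z i) ^ 2 ≤ ε ^ 2 / 18) (hv2 : ∑ i, (v i - w i) ^ 2 ≤ ε ^ 2 / 18) :
    |∑ i, u i * v i| ≤ 2 * T ∧ |∑ i, u i * v i - ∑ i, z i * w i| ≤ 3 / 5 * ε * T ∧
    (∀ i, i ∉ I → u i = 0 ∨ v i = 0) ∧ ∑ i ∈ I, (u i ^ 2 + v i ^ 2) ≤ 4 * T ^ 2 := by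
  have hI' : ∀ i, i ∉ I → u i = 0 ∨ v i = 0 := by
    intro i hi
    rcases hI i hi with h | h
    · left
      have := huz i
      rw [h] at this
      exact pow_eq_zero_iff (two_ne_zero) |>.1 (le_antisymm (by simpa using this) (sq_nonneg _))
    · right
      have := hvw i
      rw [h] at this
      exact pow_eq_zero_iff (two_ne_zero) |>.1 (le_antisymm (by simpa using this) (sq_nonneg _))
  have hsub : ∀ f : Fin n → ℝ, (∀ i, 0 ≤ f i) → ∑ i ∈ I, f i ≤ ∑ i, f i := fun f hf =>
    Finset.sum_le_sum_of_subset_of_nonneg (Finset.subset_univ _) fun i _ _ => hf i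
  have huI : ∑ i ∈ I, u i ^ 2 ≤ 2 * T ^ 2 := by
    calc _ ≤ ∑ i ∈ I, 2 * z i ^ 2 := Finset.sum_le_sum fun i _ => huz i
      _ = 2 * ∑ i ∈ I, z i ^ 2 := by rw [Finset.mul_sum]
      _ ≤ _ := by linarith
  have hvI : ∑ i ∈ I, v i ^ 2 ≤ 2 * T ^ 2 := by
    calc _ ≤ ∑ i ∈ I, 2 * w i ^ 2 := Finset.sum_le_sum fun i _ => hvw i
      _ = 2 * ∑ i ∈ I, w i ^ 2 := by rw [Finset.mul_sum]
      _ ≤ _ := by linarith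
  have huv : ∑ i, u i * v i = ∑ i ∈ I, u i * v i := by
    symm
    refine Finset.sum_subset (Finset.subset_univ _) fun i _ hi => ?_
    rcases hI' i hi with h | h <;> simp [h]
  have hzw : ∑ i, z i * w i = ∑ i ∈ I, z i * w i := by
    symm
    refine Finset.sum_subset (Finset.subset_univ _) fun i _ hi => ?_
    rcases hI i hi with h | h <;> simp [h]
  refine ⟨?_, ?_, hI', ?_⟩
  · rw [huv]
    refine cs I u v (2 * T ^ 2) 1 _ (by positivity) huI ?_ (by nlinarith)
    rw [← hv1]; exact hsub _ fun i => sq_nonneg _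
  · rw [huv, hzw, ← Finset.sum_sub_distrib]
    have : ∑ i ∈ I, (u i * v i - z i * w i) =
        ∑ i ∈ I, u i * (v i - w i) + ∑ i ∈ I, w i * (u i - z i) := by
      rw [← Finset.sum_add_distrib]
      exact Finset.sum_congr rfl fun i _ => by ring
    rw [this]
    have e1 := cs I u (fun i => v i - w i) (2 * T ^ 2) (ε ^ 2 / 18) (ε * T / 3) (by positivity) huI
      ((hsub _ fun i => sq_nonneg _).trans hv2) (by nlinarith)
    have e2 := cs I w (fun i => u i - z i) (T ^ 2) (ε ^ 2 / 18) (ε * T / 4) (by positivity) hw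
      ((hsub _ fun i => sq_nonneg _).trans hu2) (by nlinarith [sq_nonneg (ε * T)])
    refine (abs_add_le _ _).trans ?_
    have : 0 ≤ ε * T := by positivity
    linarith
  · rw [Finset.sum_add_distrib]; linarith

/-- Block counting. -/
lemma block_card (L k : ℕ) (hk : k ≤ L) (x : ℝ) (hx : x = k) :
    ((Finset.univ.filter fun q : Fin L => ((q : ℕ) + 1 : ℝ) ≤ x).card : ℝ) = x := by
  subst hx
  have : (Finset.univ.filter fun q : Fin L => ((q : ℕ) + 1 : ℝ) ≤ k) =
      Finset.univ.filter fun q : Fin L => (q : ℕ) < k := by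
    ext q
    simp only [Finset.mem_filter, Finset.mem_univ, true_and]
    constructor
    · intro h
      have : (q : ℕ) + 1 ≤ k := by exact_mod_cast h
      omega
    · intro h
      have : (q : ℕ) + 1 ≤ k := h
      exact_mod_cast this
  rw [this, Fin.card_filter_val_lt]
  simp [hk]

lemma block_sum {n L : ℕ} (x : Fin n → ℝ) (hx : ∀ i, ∃ k : ℕ, k ≤ L ∧ x i = k)
    (c : Fin n → ℝ) :
    ∑ p ∈ Finset.univ.filter (fun p : Fin n × Fin L => ((p.2 : ℕ) + 1 : ℝ) ≤ x p.1), c p.1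
      = ∑ i, x i * c i := by
  rw [Finset.sum_filter, Fintype.sum_prod_type]
  refine Finset.sum_congr rfl fun i _ => ?_
  obtain ⟨k, hk, hk'⟩ := hx i
  simp only
  rw [← Finset.sum_filter, Finset.sum_const, nsmul_eq_mul, block_card L k hk _ hk']

end WMH

namespace WMH

noncomputable def Zp {J : Type*} (W A : Finset J) (c : J → ℝ) (h : J → ℝ) : ℝ :=
  ∑ p ∈ A, (minEv W p).indicator (fun _ => c p) h

lemma minEv_unique {J : Type*} {W : Finset J} {h : J → ℝ} (hh : Function.Injective h) {p q : J}
    (hp : p ∈ W) (hq : q ∈ W) (h1 : h ∈ minEv W p) (h2 : h ∈ minEv W q) : p = q :=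
  hh (le_antisymm (h1 q hq) (h2 p hp))

lemma Zp_eq {J : Type*} {W A : Finset J} (hA : A ⊆ W) (c : J → ℝ) {h : J → ℝ}
    (hh : Function.Injective h) {p : J} (hp : p ∈ A) (h1 : h ∈ minEv W p) :
    Zp W A c h = c p := by
  unfold Zp
  rw [Finset.sum_eq_single_of_mem p hp]
  · rw [Set.indicator_of_mem h1]
  · intro q hq hqp
    rw [Set.indicator_of_notMem]
    intro h2
    exact hqp (minEv_unique hh (hA hq) (hA hp) h2 h1)

lemma Zp_eq_zero {J : Type*} {W A : Finset J} (c : J → ℝ) {h : J → ℝ}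
    (h1 : ∀ p ∈ A, h ∉ minEv W p) : Zp W A c h = 0 := by
  unfold Zp
  refine Finset.sum_eq_zero fun p hp => ?_
  rw [Set.indicator_of_notMem (h1 p hp)]

lemma Zp_memLp {J : Type*} [Fintype J] (W A : Finset J) (c : J → ℝ) (q : ℝ≥0∞) :
    MemLp (Zp W A c) q (uniformHash J) := by
  unfold Zp
  refine memLp_finsetSum _ fun p _ => ?_
  exact memLp_indicator_const _ (measurableSet_minEv W p) _ (Or.inr (measure_ne_top _ _))

lemma Zp_mean {J : Type*} [Fintype J] {W A : Finset J} (hA : A ⊆ W) (c : J → ℝ) :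
    ∫ h, Zp W A c h ∂(uniformHash J) = (∑ p ∈ A, c p) / #W := by
  unfold Zp
  rw [integral_finsetSum, Finset.sum_div]
  · refine Finset.sum_congr rfl fun p hp => ?_
    rw [integral_indicator_const _ (measurableSet_minEv W p), minEv_prob W (hA hp), smul_eq_mul]
    ring
  · intro p _
    exact (integrable_const _).indicator (measurableSet_minEv W p)

lemma Zp_sq {J : Type*} [Fintype J] {W A : Finset J} (hA : A ⊆ W) (c : J → ℝ) :
    ∫ h, Zp W A c h ^ 2 ∂(uniformHash J) = (∑ p ∈ A, c p ^ 2) / #W := by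
  rw [← Zp_mean hA]
  refine integral_congr_ae ?_
  filter_upwards [ae_inj J] with h hh
  by_cases hex : ∃ p ∈ A, h ∈ minEv W p
  · obtain ⟨p, hp, hp'⟩ := hex
    rw [Zp_eq hA c hh hp hp', Zp_eq hA _ hh hp hp']
  · push Not at hex
    rw [Zp_eq_zero _ hex, Zp_eq_zero _ hex]; norm_num

lemma argmin_mem {α : Type*} (s : Finset α) (hs : s.Nonempty) (f : α → ℝ) :
    argminOn s hs f ∈ s := (s.exists_min_image f hs).choose_spec.1

lemma argmin_le {α : Type*} (s : Finset α) (hs : s.Nonempty) (f : α → ℝ) :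
    ∀ q ∈ s, f (argminOn s hs f) ≤ f q := (s.exists_min_image f hs).choose_spec.2

lemma min_union {α : Type*} [DecidableEq α] (s t : Finset α) (hs : s.Nonempty) (ht : t.Nonempty)
    (f : α → ℝ) :
    min (f (argminOn s hs f)) (f (argminOn t ht f)) = (s ∪ t).inf' (hs.mono subset_union_left) f := by
  rw [Finset.inf'_union hs ht]
  have : ∀ (s : Finset α) (hs : s.Nonempty), f (argminOn s hs f) = s.inf' hs f := fun s hs =>
    le_antisymm (Finset.le_inf' _ _ (argmin_le s hs f)) (Finset.inf'_le _ (argmin_mem s hs f))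
  rw [this, this]

noncomputable def cw {n L : ℕ} (u v : Fin n → ℝ) (p : Fin n × Fin L) : ℝ :=
  u p.1 * v p.1 / min (u p.1 ^ 2) (v p.1 ^ 2)

lemma Zw_eq {n L : ℕ} (u v : Fin n → ℝ)
    (hU : (expandedSupport L u).Nonempty) (hV : (expandedSupport L v).Nonempty)
    {h : Fin n × Fin L → ℝ} (hh : Function.Injective h) :
    Zw u v hU hV h = Zp (expandedSupport L u ∪ expandedSupport L v)
      (expandedSupport L u ∩ expandedSupport L v) (cw u v) h := by
  set U := expandedSupport L u
  set V := expandedSupport L v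
  have hsub : U ∩ V ⊆ U ∪ V := Finset.inter_subset_left.trans Finset.subset_union_left
  unfold Zw
  by_cases heq : h (argminOn U hU h) = h (argminOn V hV h)
  · rw [if_pos heq, one_mul]
    have he := hh heq
    have hp : argminOn U hU h ∈ U ∩ V :=
      Finset.mem_inter.2 ⟨argmin_mem _ _ _, he ▸ argmin_mem _ _ _⟩
    rw [Zp_eq hsub _ hh hp, cw, ← he]
    intro q hq
    rcases Finset.mem_union.1 hq with hq | hq
    · exact argmin_le U hU h q hq
    · rw [heq]; exact argmin_le V hV h q hq
  · rw [if_neg heq, zero_mul, Zp_eq_zero]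
    intro p hp hmin
    apply heq
    obtain ⟨h1, h2⟩ := Finset.mem_inter.1 hp
    apply le_antisymm
    · exact (argmin_le U hU h p h1).trans
        (hmin _ (Finset.mem_union_right _ (argmin_mem _ _ _)))
    · exact (argmin_le V hV h p h2).trans
        (hmin _ (Finset.mem_union_left _ (argmin_mem _ _ _)))

lemma min_memLp {J : Type*} [Fintype J] (W : Finset J) (hW : W.Nonempty) :
    MemLp (fun h : J → ℝ => W.inf' hW h) 2 (uniformHash J) := by
  refine MemLp.of_bound (measurable_min W hW).aestronglyMeasurable 1 ?_
  filter_upwards [ae_min_range W hW] with h hh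
  rw [Real.norm_eq_abs, abs_of_nonneg hh.1]; exact hh.2

/-- Expectation data for the normalized estimator. -/
lemma Z_moments {n L : ℕ} (hL : 0 < L) (u v : Fin n → ℝ) (I : Finset (Fin n)) (T : ℝ)
    (hu : ∀ i, ∃ k : ℕ, u i ^ 2 * L = k) (hv : ∀ i, ∃ k : ℕ, v i ^ 2 * L = k)
    (hu1 : ∑ i, u i ^ 2 = 1) (hv1 : ∑ i, v i ^ 2 = 1)
    (hU : (expandedSupport L u).Nonempty)
    (hI : ∀ i, i ∉ I → u i = 0 ∨ v i = 0) (hT : ∑ i ∈ I, (u i ^ 2 + v i ^ 2) ≤ 4 * T ^ 2)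
    (W A : Finset (Fin n × Fin L)) (hW : W = expandedSupport L u ∪ expandedSupport L v)
    (hA : A = expandedSupport L u ∩ expandedSupport L v) :
    ∫ h, (#W / L : ℝ) * Zp W A (cw u v) h ∂(uniformHash (Fin n × Fin L)) = ∑ i, u i * v i ∧
    ∫ h, ((#W / L : ℝ) * Zp W A (cw u v) h) ^ 2 ∂(uniformHash (Fin n × Fin L)) ≤ 8 * T ^ 2 := by
  have hL' : (0:ℝ) < L := by exact_mod_cast hL
  have hsub : A ⊆ W := by
    rw [hA, hW]; exact Finset.inter_subset_left.trans Finset.subset_union_left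
  have hWpos : (0:ℝ) < #W := by
    have : 0 < #W := Finset.card_pos.2 (hW ▸ hU.mono Finset.subset_union_left)
    exact_mod_cast this
  have hle : ∀ (x : Fin n → ℝ), (∑ i, x i ^ 2 = 1) → ∀ i, x i ^ 2 ≤ 1 := by
    intro x hx i
    rw [← hx]
    exact Finset.single_le_sum (f := fun i => x i ^ 2) (fun i _ => sq_nonneg _) (Finset.mem_univ i)
  have hnat : ∀ x : Fin n → ℝ, (∑ i, x i ^ 2 = 1) → (∀ i, ∃ k : ℕ, x i ^ 2 * L = k) →
      ∀ i, ∃ k : ℕ, k ≤ L ∧ x i ^ 2 * L = k := by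
    intro x hx hx' i
    obtain ⟨k, hk⟩ := hx' i
    refine ⟨k, ?_, hk⟩
    have : (k:ℝ) ≤ L := by
      rw [← hk]
      have := hle x hx i
      nlinarith
    exact_mod_cast this
  have hun := hnat u hu1 hu
  have hvn := hnat v hv1 hv
  have hAf : A = Finset.univ.filter
      (fun p : Fin n × Fin L => ((p.2 : ℕ) + 1 : ℝ) ≤ min (u p.1 ^ 2 * L) (v p.1 ^ 2 * L)) := by
    rw [hA]; ext p; simp [expandedSupport]
  have hsum : ∀ c : Fin n → ℝ, ∑ p ∈ A, c p.1 = ∑ i, (L * min (u i ^ 2) (v i ^ 2)) * c i := by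
    intro c
    rw [hAf, block_sum (fun i => min (u i ^ 2 * L) (v i ^ 2 * L)) ?_ c]
    · refine Finset.sum_congr rfl fun i _ => ?_
      rw [← min_mul_of_nonneg _ _ hL'.le]; ring
    · intro i
      rcases min_choice (u i ^ 2 * L) (v i ^ 2 * L) with h | h
      · rw [h]; exact hun i
      · rw [h]; exact hvn i
  have hUcard : ∀ x : Fin n → ℝ, (∑ i, x i ^ 2 = 1) → (∀ i, ∃ k : ℕ, x i ^ 2 * L = k) →
      (#(expandedSupport L x) : ℝ) = L := by
    intro x hx hx'
    have := block_sum (L := L) (fun i => x i ^ 2 * L) (hnat x hx hx') (fun _ => 1)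
    simp only [Finset.sum_const, nsmul_eq_mul, mul_one] at this
    rw [← Finset.sum_mul, hx, one_mul] at this
    exact this
  have hWle : (#W : ℝ) ≤ 2 * L := by
    have : (#W : ℝ) ≤ #(expandedSupport L u) + #(expandedSupport L v) := by
      rw [hW]; exact_mod_cast Finset.card_union_le _ _
    rw [hUcard u hu1 hu, hUcard v hv1 hv] at this
    linarith
  constructor
  · rw [integral_const_mul, Zp_mean hsub]
    have := hsum (fun i => u i * v i / min (u i ^ 2) (v i ^ 2))
    unfold cw
    rw [this]
    have h2 : ∀ i, (L * min (u i ^ 2) (v i ^ 2)) * (u i * v i / min (u i ^ 2) (v i ^ 2)) =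
        L * (u i * v i) := by
      intro i
      by_cases h0 : u i = 0
      · simp [h0]
      by_cases h1 : v i = 0
      · simp [h1]
      have : 0 < min (u i ^ 2) (v i ^ 2) := lt_min (by positivity) (by positivity)
      field_simp
    rw [Finset.sum_congr rfl fun i _ => h2 i, ← Finset.mul_sum]
    field_simp
  · simp_rw [mul_pow]
    rw [integral_const_mul, Zp_sq hsub]
    have := hsum (fun i => (u i * v i / min (u i ^ 2) (v i ^ 2)) ^ 2)
    unfold cw
    rw [this]
    have h2 : ∀ i, (L * min (u i ^ 2) (v i ^ 2)) * (u i * v i / min (u i ^ 2) (v i ^ 2)) ^ 2 ≤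
        if i ∈ I then L * (u i ^ 2 + v i ^ 2) else 0 := by
      intro i
      by_cases h0 : u i = 0
      · simp only [h0]; split_ifs
        · simp; positivity
        · simp
      by_cases h1 : v i = 0
      · simp only [h1]; split_ifs
        · simp; positivity
        · simp
      have hi : i ∈ I := by
        by_contra hi
        rcases hI i hi with h | h <;> contradiction
      rw [if_pos hi]
      have hmp : 0 < min (u i ^ 2) (v i ^ 2) := lt_min (by positivity) (by positivity)
      have hmm := min_mul_max (u i ^ 2) (v i ^ 2)
      have : (L * min (u i ^ 2) (v i ^ 2)) * (u i * v i / min (u i ^ 2) (v i ^ 2)) ^ 2 =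
          L * max (u i ^ 2) (v i ^ 2) := by
        rw [div_pow, mul_pow, ← hmm]
        field_simp
      rw [this]
      refine mul_le_mul_of_nonneg_left (max_le ?_ ?_) hL'.le
      · linarith [sq_nonneg (v i)]
      · linarith [sq_nonneg (u i)]
    have h3 : ∑ i, (L * min (u i ^ 2) (v i ^ 2)) * (u i * v i / min (u i ^ 2) (v i ^ 2)) ^ 2 ≤
        L * (4 * T ^ 2) := by
      refine (Finset.sum_le_sum fun i _ => h2 i).trans ?_
      rw [← Finset.sum_filter, Finset.filter_mem_eq_inter, Finset.univ_inter, ← Finset.mul_sum]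
      exact mul_le_mul_of_nonneg_left hT hL'.le
    calc _ ≤ (#W / L : ℝ) ^ 2 * ((L * (4 * T ^ 2)) / #W) := by gcongr
      _ = (#W / L : ℝ) * (4 * T ^ 2) := by field_simp
      _ ≤ 2 * (4 * T ^ 2) := by
        gcongr
        rw [div_le_iff₀ hL']; exact hWle
      _ = _ := by ring

lemma vnorm_pos {n : ℕ} {a : Fin n → ℝ} (ha : a ≠ 0) : 0 < vnorm a := by
  obtain ⟨i, hi⟩ := Function.ne_iff.1 ha
  refine Real.sqrt_pos.2 (Finset.sum_pos' (fun i _ => sq_nonneg _) ⟨i, Finset.mem_univ i, ?_⟩)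
  have : a i ≠ 0 := hi
  positivity

lemma vnorm_unit {n : ℕ} {a : Fin n → ℝ} (ha : a ≠ 0) : ∑ i, (a i / vnorm a) ^ 2 = 1 := by
  have h := vnorm_pos ha
  simp_rw [div_pow]
  rw [← Finset.sum_div, div_eq_one_iff_eq (by positivity), vnorm, Real.sq_sqrt]
  exact Finset.sum_nonneg fun i _ => sq_nonneg _

lemma vnormOn_scale {n : ℕ} (I : Finset (Fin n)) {a : Fin n → ℝ} (ha : a ≠ 0) :
    vnormOn I a = vnorm a * Real.sqrt (∑ i ∈ I, (a i / vnorm a) ^ 2) := by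
  have h := vnorm_pos ha
  simp_rw [div_pow]
  rw [← Finset.sum_div, Real.sqrt_div' _ (sq_nonneg _), Real.sqrt_sq h.le, vnormOn]
  field_simp

end WMH

/-- Main result (Weighted MinHash inner product sketching, constant success probability):
there is an absolute constant `C > 0` such that for `ε ∈ (0,1)`, nonzero `a, b ∈ ℝⁿ`, an
integer `L ≥ 9n⁶/ε²`, an integer `m ≥ C/ε²`, and `m` mutually independent uniform hash
families on `{1,...,n} × {1,...,L}`, with `u = Round(a/‖a‖, L)`, `v = Round(b/‖b‖, L)`,
the estimate `F = ‖a‖ ‖b‖ (M̃/m) ∑ᵢ Zᵢ`, where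
`M̃ = (1/L)(m / ∑ᵢ min(hⁱ(ℓ_Uⁱ), hⁱ(ℓ_Vⁱ)) - 1)`, satisfies
`|F - ⟨a,b⟩| ≤ ε max(‖a_I‖ ‖b‖, ‖a‖ ‖b_I‖)` with probability at least `2/3`,
where `I = supp a ∩ supp b`. -/
theorem weighted_minhash_estimator :
    ∃ C : ℝ, 0 < C ∧
      ∀ (n : ℕ) (ε : ℝ), ε ∈ Set.Ioo (0 : ℝ) 1 →
      ∀ (a b : Fin n → ℝ), a ≠ 0 → b ≠ 0 →
      ∀ L : ℕ, 9 * (n : ℝ) ^ 6 / ε ^ 2 ≤ L →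
      ∀ u v : Fin n → ℝ,
        u = roundVec (fun j => a j / vnorm a) L →
        v = roundVec (fun j => b j / vnorm b) L →
      ∀ (hU : (expandedSupport L u).Nonempty) (hV : (expandedSupport L v).Nonempty),
      ∀ m : ℕ, C / ε ^ 2 ≤ (m : ℝ) →
        (2 : ℝ≥0∞) / 3 ≤
          hashFamilies m (Fin n × Fin L)
            {H : Fin m → Fin n × Fin L → ℝ |
              |vnorm a * vnorm b *
                  (((1 / (L : ℝ)) *
                      ((m : ℝ) / (∑ i, min (H i (argminOn (expandedSupport L u) hU (H i)))
                          (H i (argminOn (expandedSupport L v) hV (H i)))) - 1)) / m) *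
                  (∑ i, Zw u v hU hV (H i)) - ∑ k, a k * b k|
                ≤ ε * max (vnormOn (supp a ∩ supp b) a * vnorm b)
                    (vnorm a * vnormOn (supp a ∩ supp b) b)} := by
  classical
  refine ⟨12000, by norm_num, ?_⟩
  rintro n ε ⟨hε, hε1⟩ a b ha hb L hL u v hu hv hU hV m hm
  have hna := WMH.vnorm_pos ha
  have hnb := WMH.vnorm_pos hb
  have hn : 1 ≤ n := by
    obtain ⟨i, _⟩ := Function.ne_iff.1 ha
    exact Nat.one_le_of_lt i.2
  have hL2 := WMH.rfac2 n hn L ε hε hε1 hL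
  have hR := WMH.rfac n hn L ε hε hL
  have hn1 : (1 : ℝ) ≤ n := by exact_mod_cast hn
  have hLpos' : (0:ℝ) < L := by nlinarith
  have hLpos : 0 < L := by exact_mod_cast hLpos'
  have hmpos' : (0:ℝ) < m := lt_of_lt_of_le (by positivity) hm
  have hmpos : 0 < m := by exact_mod_cast hmpos'
  set z : Fin n → ℝ := fun j => a j / vnorm a with hz
  set w : Fin n → ℝ := fun j => b j / vnorm b with hw
  obtain ⟨u1, u2, u3, u4⟩ := WMH.round_facts z (WMH.vnorm_unit ha) L hL2
  obtain ⟨v1, v2, v3, v4⟩ := WMH.round_facts w (WMH.vnorm_unit hb) L hL2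
  rw [← hu] at u1 u2 u3 u4
  rw [← hv] at v1 v2 v3 v4
  set I := supp a ∩ supp b with hIdef
  set T := max (Real.sqrt (∑ i ∈ I, z i ^ 2)) (Real.sqrt (∑ i ∈ I, w i ^ 2)) with hTdef
  have hT0 : 0 ≤ T := le_max_of_le_left (Real.sqrt_nonneg _)
  have hzT : ∑ i ∈ I, z i ^ 2 ≤ T ^ 2 := (Real.sqrt_le_left hT0).1 (le_max_left _ _)
  have hwT : ∑ i ∈ I, w i ^ 2 ≤ T ^ 2 := (Real.sqrt_le_left hT0).1 (le_max_right _ _)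
  have hI : ∀ i, i ∉ I → z i = 0 ∨ w i = 0 := by
    intro i hi
    simp only [hIdef, supp, Finset.mem_inter, Finset.mem_filter, Finset.mem_univ, true_and,
      not_and_or, not_not] at hi
    rcases hi with h | h
    · left; simp [hz, h]
    · right; simp [hw, h]
  obtain ⟨i1, i2, i3, i4⟩ := WMH.inner_facts z w u v I ε T hε hT0 hI hzT hwT v2 u3 v3
    (u4.trans hR) (v4.trans hR)
  set W := expandedSupport L u ∪ expandedSupport L v with hWdef
  set A := expandedSupport L u ∩ expandedSupport L v with hAdef
  have hWne : W.Nonempty := hU.mono Finset.subset_union_left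
  obtain ⟨z1, z2⟩ := WMH.Z_moments hLpos u v I T u1 v1 u2 v2 hU i3 i4 W A hWdef hAdef
  set μ := uniformHash (Fin n × Fin L) with hμ
  set N : ℝ := (Nat.cast (Finset.card W) : ℝ) with hN
  have hN1 : 1 ≤ N := by
    have : 1 ≤ #W := Finset.card_pos.2 hWne
    rw [hN]
    exact_mod_cast this
  have hη : 0 < ε / 20 := by positivity
  have c1 := WMH.cheb μ m hmpos (fun h => N / L * WMH.Zp W A (WMH.cw u v) h)
    ((WMH.Zp_memLp W A _ 2).const_mul _) 8 T (ε / 20) hT0 hη z2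
  have c2 := WMH.cheb μ m hmpos (fun h => (N + 1) * W.inf' hWne h)
    ((WMH.min_memLp W hWne).const_mul _) 2 1 (ε / 20) zero_le_one hη (by
      simp_rw [mul_pow]
      rw [integral_const_mul, WMH.min_sq]
      rw [mul_div_assoc', div_le_iff₀ (by positivity)]
      nlinarith)
  rw [z1] at c1
  rw [integral_const_mul, WMH.min_mean, mul_one_div_cancel (by positivity)] at c2
  have c0 : ∀ᵐ H ∂(hashFamilies m (Fin n × Fin L)), ∀ i, Function.Injective (H i) :=
    ae_all_iff.2 fun i =>
      (measurePreserving_eval (fun _ : Fin m => μ) i).quasiMeasurePreserving.ae (WMH.ae_inj _)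
  rw [ae_iff] at c0
  change hashFamilies m (Fin n × Fin L) _ ≤ _ at c1
  change hashFamilies m (Fin n × Fin L) _ ≤ _ at c2
  set P := hashFamilies m (Fin n × Fin L) with hP
  set B0 : Set (Fin m → Fin n × Fin L → ℝ) := {H | ¬ ∀ i, Function.Injective (H i)} with hB0
  set B1 : Set (Fin m → Fin n × Fin L → ℝ) := {H | ε / 20 * T <
    |(∑ i, N / L * WMH.Zp W A (WMH.cw u v) (H i)) / m - ∑ i, u i * v i|} with hB1
  set B2 : Set (Fin m → Fin n × Fin L → ℝ) := {H | ε / 20 * 1 <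
    |(∑ i, (N + 1) * W.inf' hWne (H i)) / m - 1|} with hB2
  have hbad : P (B0 ∪ (B1 ∪ B2)) ≤ 1 / 3 := by
    calc P (B0 ∪ (B1 ∪ B2)) ≤ P B0 + (P B1 + P B2) :=
          (measure_union_le _ _).trans (by gcongr; exact measure_union_le _ _)
      _ ≤ 0 + (ENNReal.ofReal (8 / (m * (ε / 20) ^ 2)) + ENNReal.ofReal (2 / (m * (ε / 20) ^ 2))) := by
          gcongr; exact c0.le
      _ = ENNReal.ofReal (8 / (m * (ε / 20) ^ 2) + 2 / (m * (ε / 20) ^ 2)) := by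
          rw [zero_add, ENNReal.ofReal_add (by positivity) (by positivity)]
      _ ≤ ENNReal.ofReal (1 / 3) := by
          refine ENNReal.ofReal_le_ofReal ?_
          rw [← add_div, div_le_div_iff₀ (by positivity) (by norm_num)]
          rw [div_le_iff₀ (by positivity)] at hm
          nlinarith
      _ = 1 / 3 := by
          rw [ENNReal.ofReal_div_of_pos (by norm_num)]; simp
  have key : ∀ G : Set (Fin m → Fin n × Fin L → ℝ), (B0 ∪ (B1 ∪ B2))ᶜ ⊆ G →
      (2 : ℝ≥0∞) / 3 ≤ P G := by
    intro G hG
    have h1 : (1 : ℝ≥0∞) ≤ P G + 1 / 3 := by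
      calc (1 : ℝ≥0∞) = P Set.univ := measure_univ.symm
        _ ≤ P (G ∪ (B0 ∪ (B1 ∪ B2))) := by
          refine measure_mono fun H _ => ?_
          by_cases h : H ∈ B0 ∪ (B1 ∪ B2)
          · exact Or.inr h
          · exact Or.inl (hG h)
        _ ≤ P G + P (B0 ∪ (B1 ∪ B2)) := measure_union_le _ _
        _ ≤ _ := by gcongr
    have h2 : (2 : ℝ≥0∞) / 3 + 1 / 3 = 1 := by
      rw [← ENNReal.add_div]
      norm_num
      exact ENNReal.div_self (by norm_num) (by norm_num)
    have h3 : (2 : ℝ≥0∞) / 3 + 1 / 3 ≤ P G + 1 / 3 := h2.le.trans h1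
    have h4 : (1 : ℝ≥0∞) / 3 ≠ ∞ := ENNReal.div_ne_top (by norm_num) (by norm_num)
    exact (ENNReal.add_le_add_iff_right h4).1 h3
  apply key
  intro H hH
  simp only [Set.mem_compl_iff, Set.mem_union, not_or] at hH
  obtain ⟨g0, g1, g2⟩ := hH
  have g0' : ∀ i, Function.Injective (H i) := not_not.1 g0
  have g1' : |(∑ i, N / L * WMH.Zp W A (WMH.cw u v) (H i)) / m - ∑ i, u i * v i| ≤ ε / 20 * T :=
    not_lt.1 fun h => g1 h
  have g2' : |(∑ i, (N + 1) * W.inf' hWne (H i)) / m - 1| ≤ ε / 20 * 1 :=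
    not_lt.1 fun h => g2 h
  rw [mul_one] at g2'
  have hfin := WMH.final_ineq N _ _ _ (∑ i, z i * w i) ε T hN1 hε hε1 hT0 g2' g1' i1 i2
  have hS : ∑ i, min (H i (argminOn (expandedSupport L u) hU (H i)))
      (H i (argminOn (expandedSupport L v) hV (H i))) = ∑ i, W.inf' hWne (H i) :=
    Finset.sum_congr rfl fun i _ => WMH.min_union _ _ hU hV (H i)
  have hZ : ∑ i, Zw u v hU hV (H i) = ∑ i, WMH.Zp W A (WMH.cw u v) (H i) :=
    Finset.sum_congr rfl fun i _ => WMH.Zw_eq u v hU hV (g0' i)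
  have hab : ∑ k, a k * b k = vnorm a * vnorm b * ∑ i, z i * w i := by
    rw [Finset.mul_sum]
    refine Finset.sum_congr rfl fun i _ => ?_
    simp only [hz, hw]
    field_simp
  have hmax : max (vnormOn I a * vnorm b) (vnorm a * vnormOn I b) = vnorm a * vnorm b * T := by
    rw [WMH.vnormOn_scale I ha, WMH.vnormOn_scale I hb, hTdef, mul_max_of_nonneg _ _ (by positivity)]
    congr 1 <;> ring
  simp only [Set.mem_ofPred_eq]
  rw [hS, hZ, hab, hmax]
  rw [← Finset.mul_sum, ← Finset.mul_sum] at hfin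
  set S := ∑ i, W.inf' hWne (H i)
  set Q := ∑ i, WMH.Zp W A (WMH.cw u v) (H i)
  have e1 : (N + 1) / ((N + 1) * S / m) = m / S := by
    rw [div_div_eq_mul_div, mul_div_mul_left _ _ (by positivity)]
  rw [e1] at hfin
  have e2 : vnorm a * vnorm b * (1 / (L : ℝ) * (m / S - 1) / m) * Q -
      vnorm a * vnorm b * ∑ i, z i * w i =
      vnorm a * vnorm b * ((m / S - 1) / N * (N / L * Q / m) - ∑ i, z i * w i) := by
    have hNne : N ≠ 0 := by positivity
    generalize (m : ℝ) / S - 1 = r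
    field_simp
  rw [e2, abs_mul, abs_of_pos (by positivity)]
  calc _ ≤ vnorm a * vnorm b * (ε * T) := by gcongr
    _ = _ := by ring
end
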